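/- Let q ≥ 9 be a prime power that is a perfect square (so that q^{1/2} − 1 > 1), and let r, r' be positive real numbers with r + r' ≤ 1 − 1/(q^{1/2} − 1). Then there exists a sequence of pairs (C_i, C_i') of mutually intersecting F_q-linear codes of common lengths n_i → ∞ such that liminf_{i→∞} dim_{F_q} C_i / n_i ≥ r and liminf_{i→∞} dim_{F_q} C_i' / n_i ≥ r'. -/

import Mathlib

/-!
Put `q = ℓ ^ 2`. The codes are evaluation codes on the Garcia–Stichtenoth tower
`x_{i+1} ^ ℓ + x_{i+1} = x_i ^ ℓ / (x_i ^ (ℓ - 1) + 1)` over the field `k` with `q` elements.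
Level `j` has `N = (ℓ ^ 2 - ℓ) ℓ ^ j` rational points above the `x_0 = a` with `a ^ ℓ + a ≠ 0`
(`Node.exists_points`), and genus about `ℓ ^ (j + 1) = N / (ℓ - 1)`.

*Codes* (`EvalData`). Let `∞` be the totally ramified place above `x_0 = ∞`. Suppose that `D` is a
divisor for which `D - ∞` has no sections and is nonspecial, and that `ω` is a function without zeros
at the points, with pole order `e` at `∞`, such that `ω L L ⊆ L`, where `L` is the union of the spaces
`L(D + s ∞)`. The functions in `L` of pole order less than `s` give a code of dimension at least `s`
for `s ≤ N`. If two such functions, of pole orders less than `s` and `s'`, have words with disjoint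
supports, their product times `ω` lies in `L`, vanishes at all `N` points and has pole order at most
`s + s' - 2 + e`. For `s + s' + e ≤ N + 1` it must be zero, so one of the two functions is zero. With
`e = ℓ ^ (j + 1)` the two rates can be any `r, r'` with `r + r' ≤ 1 - 1 / (ℓ - 1)`.

*The divisor.* No function field theory is used. A level of the tower is the free algebra of rank
`ℓ ^ j` over the product of the completions of `k(x)` at `∞` and `0` and of the residue fields at the
points (`Node.base`, `Node.lev`), and `L` consists of the elements whose coordinates with respect to
the basis of monomials in `x_1, …, x_j` lie in `k[x, x⁻¹]`, and whose component at `0` lies in a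
subgroup `M`. The function `ω` is `x ^ ℓ + x`. Two properties of `M` are needed: it is a module over
the power series with `T M M ⊆ M` (`Node.Clos`), and it is triangular over the power series with
respect to the monomial basis (`Node.Chain`). Triangularity implies that `D - ∞` has no cohomology
(`Node.Compl.lev`), by induction on the level from the decomposition of Laurent series into power
series and principal parts.

*The local subgroup* `M` (`Node.exists_good`). Above a zero `ξ_i` the tower equation has the `ℓ`
solutions `β + ξ_{i+1}`, with `β ^ ℓ + β = 0`, and `M` is glued from these branches
(`Node.chain_split`). For `β = 0` one proceeds by induction. For `β ≠ 0` the next steps have poles that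
can be removed by Artin–Schreier translations `y ↦ y - c / ξ` (`Node.UState`), as long as zeros
`ξ_i, ξ_{i-1}, …, ξ_0` are available; there `M` is a subring. After that the tower is totally
ramified, and `M` is the part of order at most `E - 1` of a filtration in which `T` has order `-E`
(`Node.RState`), so that `T M M ⊆ M`.
-/

/-- Two linear codes `C, C' ⊆ Fⁿ` are mutually intersecting if any nonzero codewords
`c ∈ C` and `c' ∈ C'` have intersecting supports. -/
def MutuallyIntersecting {F : Type*} [Field F] {n : ℕ}
    (C C' : Submodule F (Fin n → F)) : Prop :=
  ∀ c ∈ C, c ≠ 0 → ∀ c' ∈ C', c' ≠ 0 → ∃ i : Fin n, c i ≠ 0 ∧ c' i ≠ 0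

open Polynomial

universe u v

set_option linter.unusedSectionVars false

/-! ### One step of the Garcia–Stichtenoth tower, as a free algebra of rank `ℓ` -/

/-- A commutative ring `R` with an element `x` for which `x ^ ℓ + x` is invertible, with inverse `u`.
This is what is needed to write down the right-hand side `x ^ (ℓ + 1) / (x ^ ℓ + x)` of the tower
equation; `x` itself is then invertible too. -/
structure Node (ℓ : ℕ) where
  R : Type u
  [ring : CommRing R]
  [nt : Nontrivial R]
  x : R
  u : R
  hu : (x ^ ℓ + x) * u = 1

namespace Node

attribute [instance] Node.ring Node.nt

variable {ℓ : ℕ} [hℓ : Fact (2 ≤ ℓ)]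

/-- The right-hand side `x ^ (ℓ + 1) / (x ^ ℓ + x) = x ^ ℓ / (x ^ (ℓ - 1) + 1)` of the tower equation. -/
def b (m : Node ℓ) : m.R := m.x ^ (ℓ + 1) * m.u

/-- The inverse of `m.b`. -/
def binv (m : Node ℓ) : m.R := (m.x ^ ℓ + m.x) * ((m.x ^ (ℓ - 1) + 1) * m.u) ^ (ℓ + 1)

theorem two_le : 2 ≤ ℓ := hℓ.out

theorem x_pow_pred (m : Node ℓ) : m.x * m.x ^ (ℓ - 1) = m.x ^ ℓ := by
  have := hℓ.out
  rw [← pow_succ', Nat.sub_add_cancel (by omega)]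

theorem x_mul_inv (m : Node ℓ) : m.x * ((m.x ^ (ℓ - 1) + 1) * m.u) = 1 := by
  have h1 := m.x_pow_pred
  have h2 := m.hu
  linear_combination h2 + m.u * h1

theorem b_mul_binv (m : Node ℓ) : m.b * m.binv = 1 := by
  have h1 := m.x_mul_inv
  have h2 := m.hu
  have h3 : (m.x * ((m.x ^ (ℓ - 1) + 1) * m.u)) ^ (ℓ + 1) = 1 := by rw [h1, one_pow]
  rw [mul_pow] at h3
  unfold b binv
  linear_combination ((m.x ^ ℓ + m.x) * m.u) * h3 + h2

/-- The tower equation `Y ^ ℓ + Y = b` as a monic polynomial in `Y`. -/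
noncomputable def poly (m : Node ℓ) : m.R[X] := X ^ ℓ + (X - C m.b)

theorem poly_deg (m : Node ℓ) : (X - C m.b).degree < (ℓ : WithBot ℕ) := by
  rw [degree_X_sub_C]
  have := hℓ.out
  exact_mod_cast this

theorem poly_monic (m : Node ℓ) : m.poly.Monic :=
  monic_X_pow_add m.poly_deg

theorem poly_degree (m : Node ℓ) : m.poly.degree = ℓ := by
  unfold poly
  rw [degree_add_eq_left_of_degree_lt, degree_X_pow]
  rw [degree_X_pow]; exact m.poly_deg

theorem poly_natDegree (m : Node ℓ) : m.poly.natDegree = ℓ :=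
  natDegree_eq_of_degree_eq_some m.poly_degree

theorem root_eq (m : Node ℓ) :
    AdjoinRoot.root m.poly ^ ℓ + AdjoinRoot.root m.poly = AdjoinRoot.of m.poly m.b := by
  have h := AdjoinRoot.eval₂_root m.poly
  conv at h =>
    lhs
    arg 3
    unfold poly
  simp only [eval₂_add, eval₂_sub, eval₂_pow, eval₂_X, eval₂_C] at h
  exact (by linear_combination h)

theorem of_inj (m : Node ℓ) : Function.Injective (AdjoinRoot.of m.poly) := by
  have key : ∀ a : m.R, AdjoinRoot.modByMonicHom m.poly_monic (AdjoinRoot.of m.poly a) = C a := by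
    intro a
    have h : (C a) %ₘ m.poly = C a := by
      rw [modByMonic_eq_self_iff m.poly_monic, poly_degree]
      refine lt_of_le_of_lt degree_C_le ?_
      have := hℓ.out
      exact_mod_cast (by omega : 0 < ℓ)
    change AdjoinRoot.modByMonicHom m.poly_monic (AdjoinRoot.mk m.poly (C a)) = C a
    rw [AdjoinRoot.modByMonicHom_mk, h]
  intro a c h
  have := key a
  rw [h, key c] at this
  exact (C_injective this).symm

/-- One step up the tower: adjoin a root `y` of `Y ^ ℓ + Y = b`. The result is free of rank `ℓ` with
basis `1, y, …, y ^ (ℓ - 1)`. -/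
noncomputable def next (m : Node ℓ) : Node ℓ where
  R := AdjoinRoot m.poly
  nt := m.of_inj.nontrivial
  x := AdjoinRoot.root m.poly
  u := AdjoinRoot.of m.poly m.binv
  hu := by rw [root_eq, ← map_mul, b_mul_binv, map_one]

/-- The structure map from a ring to the next level of its tower. -/
noncomputable def of (m : Node ℓ) : m.R →+* m.next.R := AdjoinRoot.of m.poly

theorem next_x (m : Node ℓ) : m.next.x ^ ℓ + m.next.x = m.of m.b := m.root_eq

theorem next_u (m : Node ℓ) : m.next.u = m.of m.binv := rfl

/-- The `i`-th coordinate with respect to the basis `1, y, …, y ^ (ℓ - 1)` of the next level; it is zero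
for `ℓ ≤ i`. -/
noncomputable def coef (m : Node ℓ) (i : ℕ) : m.next.R →+ m.R :=
  ((lcoeff m.R i) ∘ₗ (AdjoinRoot.modByMonicHom m.poly_monic)).toAddMonoidHom

/-- The value of a polynomial at the generator `y` of the next level. -/
noncomputable def pev (m : Node ℓ) : m.R[X] →+* m.next.R := AdjoinRoot.mk m.poly

theorem pev_X (m : Node ℓ) : m.pev X = m.next.x := rfl
theorem pev_C (m : Node ℓ) (a : m.R) : m.pev (C a) = m.of a := rfl

theorem coef_pev (m : Node ℓ) (p : m.R[X]) (hp : p.degree < ℓ) (i : ℕ) :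
    m.coef i (m.pev p) = p.coeff i := by
  have h : p %ₘ m.poly = p := by
    rw [modByMonic_eq_self_iff m.poly_monic, poly_degree]; exact hp
  change (AdjoinRoot.modByMonicHom m.poly_monic (AdjoinRoot.mk m.poly p)).coeff i = _
  rw [AdjoinRoot.modByMonicHom_mk, h]

theorem exists_rep (m : Node ℓ) (z : m.next.R) :
    ∃ p : m.R[X], p.degree < ℓ ∧ m.pev p = z ∧ ∀ i, m.coef i z = p.coeff i := by
  obtain ⟨q, rfl⟩ := AdjoinRoot.mk_surjective z
  have hd : (q %ₘ m.poly).degree < ℓ := by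
    rw [← m.poly_degree]; exact degree_modByMonic_lt _ m.poly_monic
  have he : m.pev (q %ₘ m.poly) = AdjoinRoot.mk m.poly q := by
    exact AdjoinRoot.mk_leftInverse m.poly_monic (AdjoinRoot.mk m.poly q)
  refine ⟨q %ₘ m.poly, hd, he, fun i => ?_⟩
  rw [← coef_pev _ _ hd, he]

theorem coef_ge (m : Node ℓ) (z : m.next.R) {i : ℕ} (hi : ℓ ≤ i) : m.coef i z = 0 := by
  obtain ⟨p, hp, -, h⟩ := m.exists_rep z
  rw [h]
  exact coeff_eq_zero_of_degree_lt (lt_of_lt_of_le hp (by exact_mod_cast hi))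

theorem ext (m : Node ℓ) {z w : m.next.R} (h : ∀ i, i < ℓ → m.coef i z = m.coef i w) :
    z = w := by
  obtain ⟨p, hp, rfl, hp'⟩ := m.exists_rep z
  obtain ⟨q, hq, rfl, hq'⟩ := m.exists_rep w
  congr 1
  ext i
  rw [← hp', ← hq']
  rcases lt_or_ge i ℓ with hi | hi
  · exact h i hi
  · rw [coef_ge _ _ hi, coef_ge _ _ hi]

theorem pev_sum (m : Node ℓ) (a : ℕ → m.R) :
    ∑ i ∈ Finset.range ℓ, m.of (a i) * m.next.x ^ i =
      m.pev (∑ i ∈ Finset.range ℓ, C (a i) * X ^ i) := by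
  simp [map_sum, pev_C, pev_X]

theorem coef_sum (m : Node ℓ) (a : ℕ → m.R) {i : ℕ} (hi : i < ℓ) :
    m.coef i (∑ i ∈ Finset.range ℓ, m.of (a i) * m.next.x ^ i) = a i := by
  rw [pev_sum, coef_pev]
  · simp [finsetSum_coeff, coeff_C_mul, coeff_X_pow, hi]
  · apply lt_of_le_of_lt (degree_sum_le _ _)
    rw [Finset.sup_lt_iff (by exact WithBot.bot_lt_coe ℓ)]
    intro j hj
    refine lt_of_le_of_lt (degree_C_mul_X_pow_le _ _) ?_
    exact_mod_cast Finset.mem_range.1 hj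

theorem eq_sum (m : Node ℓ) (z : m.next.R) :
    z = ∑ i ∈ Finset.range ℓ, m.of (m.coef i z) * m.next.x ^ i :=
  m.ext fun _ hi => (m.coef_sum (fun i => m.coef i z) hi).symm

theorem coef_mul_pow (m : Node ℓ) (a : m.R) {e : ℕ} (he : e < ℓ) (i : ℕ) :
    m.coef i (m.of a * m.next.x ^ e) = if i = e then a else 0 := by
  rw [show m.of a * m.next.x ^ e = m.pev (C a * X ^ e) by simp [pev_C, pev_X], coef_pev]
  · simp [coeff_C_mul, coeff_X_pow]
  · refine lt_of_le_of_lt (degree_C_mul_X_pow_le _ _) ?_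
    exact_mod_cast he

theorem coef_of_mul (m : Node ℓ) (a : m.R) (z : m.next.R) {i : ℕ} (hi : i < ℓ) :
    m.coef i (m.of a * z) = a * m.coef i z := by
  conv_lhs => rw [m.eq_sum z, Finset.mul_sum]
  simp_rw [← mul_assoc, ← map_mul]
  exact m.coef_sum (fun i => a * m.coef i z) hi

theorem coef_of (m : Node ℓ) (a : m.R) (i : ℕ) : m.coef i (m.of a) = if i = 0 then a else 0 := by
  have := hℓ.out
  simpa using m.coef_mul_pow a (e := 0) (by omega) i

/-- Ring homomorphisms that match the distinguished elements `x`. -/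
structure NHom (m m' : Node ℓ) where
  f : m.R →+* m'.R
  hx : f m.x = m'.x

theorem NHom.map_u {m m' : Node ℓ} (g : NHom m m') : g.f m.u = m'.u := by
  have h1 := congrArg g.f m.hu
  have h2 := m'.hu
  simp only [map_mul, map_add, map_pow, g.hx, map_one] at h1
  calc g.f m.u = ((m'.x ^ ℓ + m'.x) * m'.u) * g.f m.u := by rw [h2, one_mul]
    _ = ((m'.x ^ ℓ + m'.x) * g.f m.u) * m'.u := by ring
    _ = m'.u := by rw [h1, one_mul]

theorem NHom.map_b {m m' : Node ℓ} (g : NHom m m') : g.f m.b = m'.b := by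
  simp [b, g.hx, g.map_u]

theorem eval₂_poly {m m' : Node ℓ} (g : m.R →+* m'.R)
    (h : m'.x ^ ℓ + m'.x = g m.b) : m.poly.eval₂ g m'.x = 0 := by
  unfold poly
  simp only [eval₂_add, eval₂_sub, eval₂_pow, eval₂_X, eval₂_C]
  linear_combination h

/-- The homomorphism out of the next level that extends `g` and sends the generator to a given solution
`m'.x` of the tower equation. -/
noncomputable def lift {m m' : Node ℓ} (g : m.R →+* m'.R)
    (h : m'.x ^ ℓ + m'.x = g m.b) : NHom m.next m' where
  f := AdjoinRoot.lift g m'.x (eval₂_poly g h)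
  hx := AdjoinRoot.lift_root _

theorem lift_of {m m' : Node ℓ} (g : m.R →+* m'.R)
    (h : m'.x ^ ℓ + m'.x = g m.b) (a : m.R) : (lift g h).f (m.of a) = g a :=
  AdjoinRoot.lift_of (eval₂_poly g h)

/-- The base change of a homomorphism to the next level; it acts on coordinates by `g`. -/
noncomputable def NHom.next {m m' : Node ℓ} (g : NHom m m') : NHom m.next m'.next :=
  lift (m'.of.comp g.f) (by rw [next_x, RingHom.comp_apply, g.map_b])

theorem NHom.next_of {m m' : Node ℓ} (g : NHom m m') (a : m.R) :
    g.next.f (m.of a) = m'.of (g.f a) := lift_of _ _ a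

theorem NHom.coef_next {m m' : Node ℓ} (g : NHom m m') (z : m.next.R) (i : ℕ) :
    m'.coef i (g.next.f z) = g.f (m.coef i z) := by
  rcases lt_or_ge i ℓ with hi | hi
  · conv_lhs => rw [m.eq_sum z]
    simp only [map_sum, map_mul, map_pow, g.next_of, g.next.hx]
    rw [← map_sum, m'.coef_sum (fun i => g.f (m.coef i z)) hi]
  · rw [coef_ge _ _ hi, coef_ge _ _ hi, map_zero]

/-- The `j`-th level of the tower over `n`. -/
@[reducible] noncomputable def lev (n : Node ℓ) : ℕ → Node ℓ
  | 0 => n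
  | j + 1 => (lev n j).next

/-- The structure map from the bottom of the tower to its `j`-th level. -/
noncomputable def inc (n : Node ℓ) : ∀ j, n.R →+* (n.lev j).R
  | 0 => RingHom.id _
  | j + 1 => (n.lev j).of.comp (inc n j)

theorem inc_succ (n : Node ℓ) (j : ℕ) (a : n.R) : n.inc (j + 1) a = (n.lev j).of (n.inc j a) := rfl

/-- The base change of a homomorphism to the `j`-th levels. -/
noncomputable def NHom.lev {n n' : Node ℓ} (g : NHom n n') : ∀ j, NHom (n.lev j) (n'.lev j)
  | 0 => g
  | j + 1 => (NHom.lev g j).next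

theorem NHom.lev_inc {n n' : Node ℓ} (g : NHom n n') (j : ℕ) (a : n.R) :
    (g.lev j).f (n.inc j a) = n'.inc j (g.f a) := by
  induction j with
  | zero => rfl
  | succ j ih =>
    change (g.lev j).next.f ((n.lev j).of (n.inc j a)) = _
    rw [NHom.next_of, ih]; rfl

/-- If `n'` solves the tower equation over `n`, then level `j + 1` over `n` maps to level `j` over
`n'`. -/
noncomputable def desc {n n' : Node ℓ} (g : n.R →+* n'.R)
    (h : n'.x ^ ℓ + n'.x = g n.b) : ∀ j, NHom (n.lev (j + 1)) (n'.lev j)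
  | 0 => lift (m := n) (m' := n') g h
  | j + 1 => (desc g h j).next

theorem desc_inc {n n' : Node ℓ} (g : n.R →+* n'.R)
    (h : n'.x ^ ℓ + n'.x = g n.b) (j : ℕ) (a : n.R) :
    (desc g h j).f (n.inc (j + 1) a) = n'.inc j (g a) := by
  induction j with
  | zero => exact lift_of g h a
  | succ j ih =>
    change (desc g h j).next.f ((n.lev (j + 1)).of (n.inc (j + 1) a)) = _
    rw [NHom.next_of, ih]; rfl

theorem NHom.lev_succ {n n' : Node ℓ} (g : NHom n n') (j : ℕ) : g.lev (j + 1) = (g.lev j).next := rfl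

/-- The elements of the next level all of whose `ℓ` coordinates lie in `Q`. -/
def extend (m : Node ℓ) (Q : AddSubgroup m.R) : AddSubgroup m.next.R where
  carrier := {z | ∀ i, i < ℓ → m.coef i z ∈ Q}
  zero_mem' := by intro i _; simp
  add_mem' := by
    intro a b ha hb i hi
    rw [map_add]; exact Q.add_mem (ha i hi) (hb i hi)
  neg_mem' := by
    intro a ha i hi
    rw [map_neg]; exact Q.neg_mem (ha i hi)

end Node

/-! ### Filtrations by pole order and total ramification -/

namespace Node
variable {ℓ : ℕ} [hℓ : Fact (2 ≤ ℓ)]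

/-- An increasing multiplicative filtration indexed by `ℤ` (think of pole order at most `s`) in which
`b` has order exactly `1` and its inverse order `-1`. Such a filtration ramifies totally in the next
step of the tower. -/
structure Filt (m : Node ℓ) where
  F : ℤ → AddSubgroup m.R
  mono : ∀ {s t}, s ≤ t → F s ≤ F t
  one_mem : (1 : m.R) ∈ F 0
  mul_mem : ∀ {s t a c}, a ∈ F s → c ∈ F t → a * c ∈ F (s + t)
  hb : m.b ∈ F 1
  hb' : m.binv ∈ F (-1)

namespace Filt

/-- The filtration on the next level for which the generator `y` has order `1` and the old orders are
multiplied by `ℓ`: the coordinate of `y ^ i` must have order at most `⌊(s - i) / ℓ⌋`. -/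
def nextF {m : Node ℓ} (Φ : Filt m) (s : ℤ) : AddSubgroup m.next.R where
  carrier := {z | ∀ i : ℕ, i < ℓ → m.coef i z ∈ Φ.F ((s - i) / ℓ)}
  zero_mem' := by intro i _; simp
  add_mem' := by
    intro a b ha hb i hi
    rw [map_add]; exact AddSubgroup.add_mem _ (ha i hi) (hb i hi)
  neg_mem' := by
    intro a ha i hi
    rw [map_neg]; exact AddSubgroup.neg_mem _ (ha i hi)

variable {m : Node ℓ} (Φ : Filt m)

theorem ell_pos : (0 : ℤ) < ℓ := by
  have := hℓ.out
  omega

theorem mem_nextF {s : ℤ} {z : m.next.R} :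
    z ∈ Φ.nextF s ↔ ∀ i : ℕ, i < ℓ → m.coef i z ∈ Φ.F ((s - i) / ℓ) := Iff.rfl

theorem nextF_mono {s t : ℤ} (h : s ≤ t) : Φ.nextF s ≤ Φ.nextF t := by
  intro z hz i hi
  exact Φ.mono (Int.ediv_le_ediv ell_pos (by omega)) (hz i hi)

/-- Powers `y ^ e` with `ℓ ≤ e` are reduced with `y ^ ℓ = b - y`, which does not raise the order. -/
theorem pow_mem {r : ℤ} (a : m.R) (ha : a ∈ Φ.F r) {s : ℤ} (e : ℕ) (h : ℓ * r + e ≤ s) :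
    m.of a * m.next.x ^ e ∈ Φ.nextF s := by
  have h2 := hℓ.out
  induction e using Nat.strong_induction_on generalizing a r s with
  | _ e ih =>
    rcases lt_or_ge e ℓ with he | he
    · intro i hi
      rw [m.coef_mul_pow a he]
      split_ifs with hie
      · subst hie
        refine Φ.mono ?_ ha
        rw [Int.le_ediv_iff_mul_le ell_pos]
        linarith
      · exact AddSubgroup.zero_mem _
    · obtain ⟨d, rfl⟩ := Nat.exists_eq_add_of_le he
      have h1 : m.of a * m.next.x ^ (ℓ + d) =
          m.of (a * m.b) * m.next.x ^ d - m.of a * m.next.x ^ (d + 1) := by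
        have := m.next_x
        rw [map_mul]
        linear_combination (m.of a * m.next.x ^ d) * this
      rw [h1]
      push_cast at h
      apply AddSubgroup.sub_mem
      · refine ih d (by omega) _ (Φ.mul_mem ha Φ.hb) ?_
        linarith
      · refine ih (d + 1) (by omega) _ ha ?_
        push_cast
        linarith

theorem ediv_sub (s : ℤ) (i : ℕ) : (ℓ : ℤ) * ((s - i) / ℓ) + i ≤ s := by
  have := Int.mul_ediv_self_le (x := s - i) (k := (ℓ : ℤ)) (by have := ell_pos (ℓ := ℓ); omega)
  linarith

theorem nextF_mul {s t : ℤ} {z w : m.next.R} (hz : z ∈ Φ.nextF s) (hw : w ∈ Φ.nextF t) :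
    z * w ∈ Φ.nextF (s + t) := by
  rw [m.eq_sum z, m.eq_sum w, Finset.sum_mul_sum]
  refine AddSubgroup.sum_mem _ fun i hi => AddSubgroup.sum_mem _ fun j hj => ?_
  rw [show m.of (m.coef i z) * m.next.x ^ i * (m.of (m.coef j w) * m.next.x ^ j) =
    m.of (m.coef i z * m.coef j w) * m.next.x ^ (i + j) by rw [map_mul]; ring]
  refine Φ.pow_mem _ (Φ.mul_mem (hz i (Finset.mem_range.1 hi)) (hw j (Finset.mem_range.1 hj))) _ ?_
  have h1 := ediv_sub (ℓ := ℓ) s i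
  have h2 := ediv_sub (ℓ := ℓ) t j
  push_cast
  linarith

theorem of_mem {r : ℤ} {a : m.R} (ha : a ∈ Φ.F r) {s : ℤ} (h : ℓ * r ≤ s) :
    m.of a ∈ Φ.nextF s := by
  simpa using Φ.pow_mem a ha 0 (s := s) (by simpa using h)

theorem nextF_pow {z : m.next.R} {s : ℤ} (hz : z ∈ Φ.nextF s) (e : ℕ) :
    z ^ e ∈ Φ.nextF (e * s) := by
  induction e with
  | zero => simpa using Φ.of_mem Φ.one_mem (s := 0) (by simp)
  | succ e ih =>
    rw [pow_succ]
    convert Φ.nextF_mul ih hz using 2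
    push_cast; ring

theorem x_mem : m.next.x ∈ Φ.nextF 1 := by
  simpa using Φ.pow_mem 1 Φ.one_mem 1 (s := 1) (by simp)

/-- The inverse of the generator has order at most `-1`. -/
theorem xinv_mem : (m.next.x ^ (ℓ - 1) + 1) * m.next.u ∈ Φ.nextF (-1) := by
  have h2 := hℓ.out
  rw [add_mul, one_mul, m.next_u]
  apply AddSubgroup.add_mem
  · rw [mul_comm]
    refine Φ.pow_mem _ Φ.hb' _ ?_
    push_cast [Nat.cast_sub (by omega : 1 ≤ ℓ)]
    linarith
  · exact Φ.of_mem Φ.hb' (by linarith)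

/-- The filtration induced on the next level, with `y` of order `1` and old orders multiplied by `ℓ`. -/
noncomputable def next : Filt m.next where
  F := Φ.nextF
  mono := Φ.nextF_mono
  one_mem := by simpa using Φ.of_mem Φ.one_mem (s := 0) (by simp)
  mul_mem := Φ.nextF_mul
  hb := by
    have h1 := Φ.nextF_mul (Φ.nextF_pow Φ.x_mem (ℓ + 1)) (Φ.of_mem Φ.hb' (le_refl _))
    refine Φ.nextF_mono ?_ h1
    push_cast; linarith
  hb' := by
    have h1 := Φ.nextF_mul (Φ.of_mem Φ.hb (le_refl _)) (Φ.nextF_pow Φ.xinv_mem (ℓ + 1))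
    unfold binv
    rw [m.next_x]
    refine Φ.nextF_mono ?_ h1
    push_cast; linarith

theorem mem_next {s : ℤ} {z : m.next.R} :
    z ∈ Φ.next.F s ↔ ∀ i : ℕ, i < ℓ → m.coef i z ∈ Φ.F ((s - i) / ℓ) := Iff.rfl

/-- The subgroups of order at most `E - 1` propagate up the tower by taking them coordinatewise. This is
where the total ramification of a filtration meets `extend`. -/
theorem next_eq_extend (E : ℤ) : Φ.next.F (ℓ * E - 1) = m.extend (Φ.F (E - 1)) := by
  ext z
  rw [mem_next]
  refine forall₂_congr fun i hi => ?_
  have : (ℓ * E - 1 - i) / (ℓ : ℤ) = E - 1 := by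
    rw [Int.ediv_eq_iff_of_pos ell_pos]
    constructor <;> nlinarith
  rw [this]

/-- The order of a product is the sum of the orders, as for a valuation. -/
def Strict (Φ : Filt m) : Prop := ∀ {s t : ℤ} {a c : m.R}, a ∈ Φ.F s → a ∉ Φ.F (s - 1) →
  c ∈ Φ.F t → c ∉ Φ.F (t - 1) → a * c ∉ Φ.F (s + t - 1)

/-- The orders `ℓ * r + e` of the terms `a * y ^ e` with `0 ≤ e < ℓ` are pairwise distinct, so an element
of exact order `s` has a unique term of that order. -/
theorem exists_lead {s : ℤ} {z : m.next.R} (hz : z ∈ Φ.next.F s) (hz' : z ∉ Φ.next.F (s - 1)) :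
    ∃ (r : ℤ) (e : ℕ) (a : m.R), e < ℓ ∧ s = ℓ * r + e ∧ a ∈ Φ.F r ∧ a ∉ Φ.F (r - 1) ∧
      z - m.of a * m.next.x ^ e ∈ Φ.next.F (s - 1) := by
  have hp := ell_pos (ℓ := ℓ)
  obtain ⟨e, he⟩ := Int.eq_ofNat_of_zero_le (Int.emod_nonneg s hp.ne')
  have he' : e < ℓ := by
    have := Int.emod_lt_of_pos s hp
    omega
  have hs : s = ℓ * (s / ℓ) + e := by rw [← he]; exact (Int.mul_ediv_add_emod s ℓ).symm
  set r := s / (ℓ : ℤ) with hr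
  have key : ∀ i : ℕ, i < ℓ → i ≠ e → (s - 1 - i) / (ℓ : ℤ) = (s - i) / ℓ := by
    intro i hi hie
    rcases lt_or_gt_of_ne hie with h | h
    · trans r
      · rw [Int.ediv_eq_iff_of_pos hp]; constructor <;> nlinarith
      · symm; rw [Int.ediv_eq_iff_of_pos hp]; constructor <;> nlinarith
    · trans r - 1
      · rw [Int.ediv_eq_iff_of_pos hp]; constructor <;> nlinarith
      · symm; rw [Int.ediv_eq_iff_of_pos hp]; constructor <;> nlinarith
  have key1 : (s - e) / (ℓ : ℤ) = r := by
    rw [Int.ediv_eq_iff_of_pos hp]; constructor <;> nlinarith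
  have key2 : (s - 1 - e) / (ℓ : ℤ) = r - 1 := by
    rw [Int.ediv_eq_iff_of_pos hp]; constructor <;> nlinarith
  refine ⟨r, e, m.coef e z, he', hs, ?_, ?_, ?_⟩
  · have := hz e he'
    rwa [key1] at this
  · intro h
    apply hz'
    intro i hi
    by_cases hie : i = e
    · subst hie; rwa [key2]
    · rw [key i hi hie]; exact hz i hi
  · intro i hi
    rw [map_sub, m.coef_mul_pow _ he']
    split_ifs with hie
    · subst hie; simp
    · rw [sub_zero, key i hi hie]; exact hz i hi

theorem lead_not_mem {r : ℤ} {e : ℕ} (he : e < ℓ) {a : m.R} (ha : a ∉ Φ.F (r - 1)) :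
    m.of a * m.next.x ^ e ∉ Φ.next.F (ℓ * r + e - 1) := by
  have hp := ell_pos (ℓ := ℓ)
  intro h
  have := h e he
  rw [m.coef_mul_pow _ he, if_pos rfl] at this
  have key2 : (ℓ * r + e - 1 - e) / (ℓ : ℤ) = r - 1 := by
    rw [Int.ediv_eq_iff_of_pos hp]; constructor <;> nlinarith
  rw [key2] at this
  exact ha this

theorem Strict.next {Φ : Filt m} (h : Φ.Strict) : Φ.next.Strict := by
  intro s t z w hz hz' hw hw'
  have h2 := hℓ.out
  obtain ⟨r, e, a, he, hs, ha, ha', hd⟩ := Φ.exists_lead hz hz'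
  obtain ⟨r', e', a', he', hs', hb, hb', hd'⟩ := Φ.exists_lead hw hw'
  have hc := Φ.mul_mem ha hb
  have hc' := h ha ha' hb hb'
  set c := a * a' with hcdef
  intro hzw
  -- only the product of the leading terms matters
  have hlead : m.of c * m.next.x ^ (e + e') ∈ Φ.next.F (s + t - 1) := by
    have h1 := Φ.next.mul_mem hd hw
    have h3 : m.of a * m.next.x ^ e ∈ Φ.next.F s := Φ.pow_mem a ha e (by linarith)
    have h4 := Φ.next.mul_mem h3 hd'
    rw [show m.of c * m.next.x ^ (e + e') = z * w -
      (z - m.of a * m.next.x ^ e) * w - m.of a * m.next.x ^ e * (w - m.of a' * m.next.x ^ e') by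
        rw [hcdef, map_mul]; ring]
    refine AddSubgroup.sub_mem _ (AddSubgroup.sub_mem _ hzw ?_) ?_
    · exact Φ.next.mono (by linarith) h1
    · exact Φ.next.mono (by linarith) h4
  rcases lt_or_ge (e + e') ℓ with hl | hl
  · apply Φ.lead_not_mem hl hc'
    convert hlead using 2
    push_cast; rw [hs, hs']; ring
  · obtain ⟨d, hd⟩ := Nat.exists_eq_add_of_le hl
    have hcb : c * m.b ∉ Φ.F (r + r' + 1 - 1) := by
      intro hcb
      apply hc'
      have := Φ.mul_mem hcb Φ.hb'
      rw [mul_assoc, m.b_mul_binv, mul_one] at this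
      exact Φ.mono (by linarith) this
    have hd2 : (d : ℤ) = e + e' - ℓ := by omega
    have := Φ.lead_not_mem (e := d) (by omega) hcb
    apply this
    have h5 : m.of c * m.next.x ^ (d + 1) ∈ Φ.next.F (s + t - 1) :=
      Φ.pow_mem c hc _ (by rw [hs, hs']; push_cast; rw [hd2]; linarith)
    have h6 : m.of (c * m.b) * m.next.x ^ d =
        m.of c * m.next.x ^ (e + e') + m.of c * m.next.x ^ (d + 1) := by
      have := m.next_x
      rw [map_mul, hd]
      linear_combination (-(m.of c * m.next.x ^ d)) * this
    rw [h6]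
    refine Φ.next.mono (le_of_eq ?_) (AddSubgroup.add_mem _ hlead h5)
    rw [hs, hs', hd2]; ring

/-- The filtration `F s = {a | a * ω ^ s ∈ V}` attached to a subring `V` and a unit `ω` lying in `V`. -/
def ofSubring (V : Subring m.R) (ω : m.Rˣ) (hω : (ω : m.R) ∈ V) (h1 : m.b * ω ∈ V)
    (h2 : m.binv * ↑ω⁻¹ ∈ V) : Filt m where
  F s := V.toAddSubgroup.comap (AddMonoidHom.mulRight ((ω ^ s : m.Rˣ) : m.R))
  mono := by
    intro s t hst a ha
    change a * _ ∈ V at ha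
    change a * _ ∈ V
    obtain ⟨d, rfl⟩ := Int.le.dest hst
    rw [zpow_add, Units.val_mul, ← mul_assoc, zpow_natCast, Units.val_pow_eq_pow_val]
    exact V.mul_mem ha (V.pow_mem hω d)
  one_mem := by
    change (1 : m.R) * _ ∈ V
    simp
  mul_mem := by
    intro s t a c ha hc
    change a * _ ∈ V at ha
    change c * _ ∈ V at hc
    change a * c * _ ∈ V
    rw [zpow_add, Units.val_mul, mul_mul_mul_comm]
    exact V.mul_mem ha hc
  hb := by
    change m.b * _ ∈ V
    simpa using h1
  hb' := by
    change m.binv * _ ∈ V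
    simpa using h2

theorem mem_ofSubring {V : Subring m.R} {ω : m.Rˣ} {hω : (ω : m.R) ∈ V} {h1 : m.b * ω ∈ V}
    {h2 : m.binv * ↑ω⁻¹ ∈ V} {s : ℤ} {a : m.R} :
    a ∈ (ofSubring V ω hω h1 h2).F s ↔ a * ((ω ^ s : m.Rˣ) : m.R) ∈ V := Iff.rfl

end Filt
end Node

/-! ### Completely split steps -/

namespace Node
variable {ℓ : ℕ} [hℓ : Fact (2 ≤ ℓ)]

/-- The bottom of a tower given by an element `y` of a field. -/
@[reducible] def fld {K : Type u} [Field K] (y : K) (hy : y ^ ℓ + y ≠ 0) : Node ℓ where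
  R := K
  x := y
  u := (y ^ ℓ + y)⁻¹
  hu := mul_inv_cancel₀ hy

section split

variable {K : Type u} [Field K] {y₀ : K} {h₀ : y₀ ^ ℓ + y₀ ≠ 0} {S : Finset K}
  (hS : ∀ y ∈ S, y ^ ℓ + y ≠ 0) (hr : ∀ y ∈ S, y ^ ℓ + y = (fld y₀ h₀).b)

/-- When the tower equation over `y₀` has its solutions `S` in the field itself, level `j + 1` over `y₀`
maps to level `j` over each `y ∈ S`. If `S` has `ℓ` elements these maps form an isomorphism onto the
product (`spl_inj`, `spl_surj`). -/
noncomputable def spl (y : S) (j : ℕ) : NHom ((fld y₀ h₀).lev (j + 1)) ((fld y.1 (hS y y.2)).lev j) :=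
  desc (n := fld y₀ h₀) (n' := fld y.1 (hS y y.2)) (RingHom.id K) (hr y y.2) j

theorem spl_zero (y : S) (z : (fld y₀ h₀).next.R) (p : K[X])
    (hp : (fld y₀ h₀).pev p = z) : (spl hS hr y 0).f z = p.eval y.1 := by
  subst hp
  exact AdjoinRoot.lift_mk (eval₂_poly (m := fld y₀ h₀) (m' := fld y.1 (hS y y.2)) (RingHom.id K) (hr y y.2)) p

theorem spl_inc (y : S) (j : ℕ) (a : K) :
    (spl hS hr y j).f ((fld y₀ h₀).inc (j + 1) a) = (fld y.1 (hS y y.2)).inc j a :=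
  desc_inc (n := fld y₀ h₀) (n' := fld y.1 (hS y y.2)) (RingHom.id K) (hr y y.2) j a

theorem coef_spl (y : S) (j : ℕ) (z : ((fld y₀ h₀).lev (j + 2)).R) (i : ℕ) :
    ((fld y.1 (hS y y.2)).lev j).coef i ((spl hS hr y (j + 1)).f z) =
      (spl hS hr y j).f (((fld y₀ h₀).lev (j + 1)).coef i z) :=
  (spl hS hr y j).coef_next z i

theorem spl_inj (hc : S.card = ℓ) (j : ℕ) {z : ((fld y₀ h₀).lev (j + 1)).R}
    (h : ∀ y : S, (spl hS hr y j).f z = 0) : z = 0 := by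
  induction j with
  | zero =>
    obtain ⟨p, hp, hpz, -⟩ := (fld y₀ h₀).exists_rep z
    have : p = 0 := by
      refine Polynomial.eq_zero_of_degree_lt_of_eval_finset_eq_zero S (by rwa [hc]) fun y hy => ?_
      rw [← spl_zero hS hr ⟨y, hy⟩ z p hpz, h]
    rw [← hpz, this]
    exact map_zero _
  | succ j ih =>
    refine ((fld y₀ h₀).lev (j + 1)).ext fun i _ => ?_
    rw [map_zero]
    apply ih
    intro y
    rw [← coef_spl, h, map_zero]

theorem spl_surj (j : ℕ) (v : ∀ y : S, ((fld y.1 (hS y y.2)).lev j).R) :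
    ∃ z, ∀ y : S, (spl hS hr y j).f z = v y := by
  classical
  induction j with
  | zero =>
    let v' : K → K := fun y => if h : y ∈ S then v ⟨y, h⟩ else 0
    refine ⟨(fld y₀ h₀).pev (Lagrange.interpolate S id v'), fun y => ?_⟩
    refine (spl_zero hS hr y _ _ rfl).trans ?_
    have := Lagrange.eval_interpolate_at_node (s := S) (v := id) v' (Set.injOn_id _) y.2
    simp only [id] at this
    refine this.trans ?_
    simp [v']
  | succ j ih =>
    choose w hw using fun i : ℕ => ih (fun y => ((fld y.1 (hS y y.2)).lev j).coef i (v y))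
    refine ⟨∑ i ∈ Finset.range ℓ, ((fld y₀ h₀).lev (j + 1)).of (w i) *
      ((fld y₀ h₀).lev (j + 1)).next.x ^ i, fun y => ?_⟩
    refine ((fld y.1 (hS y y.2)).lev j).ext fun i hi => ?_
    refine (coef_spl hS hr y j _ i).trans ?_
    rw [coef_sum _ _ hi, hw]

end split

/-- `M'` is an iterated extension of `ℓ` copies of `M`: with respect to the flag of elements of degree at
most `J` in the generator, the leading coefficients of the elements of `M'` are exactly the elements
of `M`, for each `J < ℓ`. -/
def Tri (m : Node ℓ) (M : AddSubgroup m.R) (M' : AddSubgroup m.next.R) : Prop :=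
  ∀ J < ℓ, (∀ z ∈ M', (∀ i, J < i → m.coef i z = 0) → m.coef J z ∈ M) ∧
    ∀ a ∈ M, ∃ z ∈ M', (∀ i, J < i → m.coef i z = 0) ∧ m.coef J z = a

/-- `M` is reached from the subgroup `O` at the bottom of the tower by `j` steps, each triangular in the
sense of `Tri`. -/
def Chain (n : Node ℓ) (O : AddSubgroup n.R) : ∀ j, AddSubgroup (n.lev j).R → Prop
  | 0, M => M = O
  | j + 1, M' => ∃ M, Chain n O j M ∧ Tri (n.lev j) M M'

theorem tri_extend (m : Node ℓ) (M : AddSubgroup m.R) : Tri m M (m.extend M) := by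
  intro J hJ
  refine ⟨fun z hz _ => hz J hJ, fun a ha => ⟨m.of a * m.next.x ^ J, ?_, ?_, ?_⟩⟩
  · intro i _
    rw [m.coef_mul_pow _ hJ]
    split_ifs
    · exact ha
    · exact M.zero_mem
  · intro i hi
    rw [m.coef_mul_pow _ hJ, if_neg (by omega)]
  · rw [m.coef_mul_pow _ hJ, if_pos rfl]

/-- Lagrange interpolation at nodes whose differences are units of `O` keeps coefficients in `O`. -/
theorem coeff_mem_of_eval_mem {K : Type u} [Field K] (O : Subring K) (S : Finset K)
    (hSO : ∀ y ∈ S, y ∈ O) (hd : ∀ y ∈ S, ∀ y' ∈ S, y ≠ y' → (y - y')⁻¹ ∈ O)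
    (p : K[X]) (hp : p.degree < S.card) (h : ∀ y ∈ S, p.eval y ∈ O) (i : ℕ) : p.coeff i ∈ O := by
  classical
  have hC : ∀ a ∈ O, C a ∈ lifts O.subtype := fun a ha => C_mem_lifts O.subtype ⟨a, ha⟩
  have key : p ∈ lifts O.subtype := by
    rw [Lagrange.eq_interpolate (s := S) (v := id) (Set.injOn_id _) hp, Lagrange.interpolate_apply]
    refine sum_mem fun y hy => mul_mem (hC _ (h y hy)) ?_
    unfold Lagrange.basis
    refine prod_mem fun y' hy' => ?_
    unfold Lagrange.basisDivisor
    rw [Finset.mem_erase] at hy'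
    refine mul_mem (hC _ (hd _ hy _ hy'.2 hy'.1.symm)) ?_
    rw [sub_eq_add_neg, ← C_neg]
    exact add_mem (X_mem_lifts _) (hC _ (O.neg_mem (hSO _ hy'.2)))
  rw [lifts_iff_coeff_lifts] at key
  obtain ⟨a, ha⟩ := key i
  rw [← ha]; exact a.2

/-- In a completely split first step, local subgroups over the `ℓ` solutions can be glued into a
subgroup over `y₀`, one level higher. -/
theorem chain_split {K : Type u} [Field K] (O : Subring K) {y₀ : K} {h₀ : y₀ ^ ℓ + y₀ ≠ 0}
    {S : Finset K} (hS : ∀ y ∈ S, y ^ ℓ + y ≠ 0) (hr : ∀ y ∈ S, y ^ ℓ + y = (fld y₀ h₀).b)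
    (hc : S.card = ℓ) (hSO : ∀ y ∈ S, y ∈ O)
    (hd : ∀ y ∈ S, ∀ y' ∈ S, y ≠ y' → (y - y')⁻¹ ∈ O) (j : ℕ)
    (M : ∀ y : S, AddSubgroup ((fld y.1 (hS y y.2)).lev j).R)
    (hM : ∀ y : S, Chain (fld y.1 (hS y y.2)) O.toAddSubgroup j (M y)) :
    Chain (fld y₀ h₀) O.toAddSubgroup (j + 1)
      (⨅ y : S, (M y).comap (spl hS hr y j).f.toAddMonoidHom) := by
  induction j with
  | zero =>
    refine ⟨O.toAddSubgroup, rfl, ?_⟩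
    have hM' : ∀ y, M y = O.toAddSubgroup := hM
    have hN : (⨅ y : S, (M y).comap (spl hS hr y 0).f.toAddMonoidHom) =
        (fld y₀ h₀).extend O.toAddSubgroup := by
      ext z
      rw [AddSubgroup.mem_iInf]
      constructor
      · intro hz i hi
        obtain ⟨p, hp, hpz, hpc⟩ := (fld y₀ h₀).exists_rep z
        rw [hpc]
        refine coeff_mem_of_eval_mem O S hSO hd p (by rwa [hc]) (fun y hy => ?_) i
        rw [← spl_zero hS hr ⟨y, hy⟩ z p hpz]
        have := hz ⟨y, hy⟩
        rw [hM'] at this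
        exact this
      · intro hz y
        rw [hM']
        obtain ⟨p, hp, hpz, hpc⟩ := (fld y₀ h₀).exists_rep z
        change (spl hS hr y 0).f z ∈ O
        rw [spl_zero hS hr y z p hpz, eval_eq_sum_range]
        refine sum_mem fun i _ => mul_mem ?_ (pow_mem (hSO _ y.2) _)
        rw [← hpc]
        rcases lt_or_ge i ℓ with hi | hi
        · exact hz i hi
        · rw [coef_ge _ _ hi]; exact O.zero_mem
    rw [hN]
    exact tri_extend _ _
  | succ j ih =>
    choose M₁ hM₁ hT using hM
    refine ⟨_, ih M₁ hM₁, ?_⟩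
    intro J hJ
    constructor
    · intro z hz hz0
      rw [AddSubgroup.mem_iInf] at hz ⊢
      intro y
      change (spl hS hr y j).f _ ∈ M₁ y
      rw [← coef_spl]
      refine (hT y J hJ).1 _ (hz y) fun i hi => ?_
      rw [coef_spl, hz0 i hi, map_zero]
    · intro a ha
      rw [AddSubgroup.mem_iInf] at ha
      choose w hw hw0 hwJ using fun y => (hT y J hJ).2 _ (ha y)
      obtain ⟨z, hz⟩ := spl_surj hS hr (j + 1) w
      have hz' : ∀ i (y : S), (spl hS hr y j).f (((fld y₀ h₀).lev (j + 1)).coef i z) =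
          ((fld y.1 (hS y y.2)).lev j).coef i (w y) := by
        intro i y
        rw [← coef_spl, hz]
      refine ⟨z, ?_, ?_, ?_⟩
      · rw [AddSubgroup.mem_iInf]
        intro y
        change (spl hS hr y (j + 1)).f z ∈ M y
        rw [hz]; exact hw y
      · intro i hi
        refine spl_inj hS hr hc j fun y => ?_
        rw [hz', hw0 y i hi]
      · rw [← sub_eq_zero]
        refine spl_inj hS hr hc j fun y => ?_
        rw [map_sub, hz', hwJ y]
        exact sub_self _

end Node

/-! ### Local models at the poles above `x = 0` -/

namespace Node
variable {ℓ : ℕ} [hℓ : Fact (2 ≤ ℓ)]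

/-- If the generator `y` can be translated by `e` so that `w = y - e` satisfies `w ^ ℓ + w = B` with
`B ∈ M`, then `M[w]` is triangular over `M`. This covers poles of `b` that can be removed by an
Artin–Schreier translation. -/
theorem shift (m : Node ℓ) (M : Subring m.R) (e B : m.R) (hB : B ∈ M)
    (hw : (m.next.x - m.of e) ^ ℓ + (m.next.x - m.of e) = m.of B) :
    ∃ M' : Subring m.next.R, (∀ a ∈ M, m.of a ∈ M') ∧ m.next.x - m.of e ∈ M' ∧
      Tri m M.toAddSubgroup M'.toAddSubgroup := by
  set w := m.next.x - m.of e with hwdef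
  let g : M[X] →+* m.next.R := eval₂RingHom (m.of.comp M.subtype) w
  have hg : ∀ p : M[X], g p = m.pev (taylor (-e) (p.map M.subtype)) := by
    intro p
    have h1 : g = (m.pev.comp (taylorAlgHom (-e)).toRingHom).comp (mapRingHom M.subtype) := by
      refine Polynomial.ringHom_ext ?_ ?_
      · intro a
        simp [g, pev_C]
      · simp [g, pev_C, pev_X, hwdef, sub_eq_add_neg]
    rw [h1]
    rfl
  have hgC : ∀ a (ha : a ∈ M), g (C ⟨a, ha⟩) = m.of a := by intro a ha; simp [g]
  have hcoef : ∀ p : M[X], p.degree < ℓ → ∀ i, m.coef i (g p) =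
      (taylor (-e) (p.map M.subtype)).coeff i := by
    intro p hp i
    rw [hg, coef_pev]
    rw [degree_taylor]
    exact lt_of_le_of_lt degree_map_le hp
  refine ⟨g.range, fun a ha => ⟨C ⟨a, ha⟩, hgC a ha⟩, ⟨X, by simp [g]⟩, ?_⟩
  intro J hJ
  constructor
  · rintro z ⟨p₀, rfl⟩ hz
    -- reduce the polynomial to degree `< ℓ`
    let P : M[X] := X ^ ℓ + (X - C ⟨B, hB⟩)
    have hd : (X - C (⟨B, hB⟩ : M)).degree < (ℓ : WithBot ℕ) := by
      rw [degree_X_sub_C]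
      have := hℓ.out
      exact_mod_cast this
    have hPm : P.Monic := monic_X_pow_add hd
    have hPd : P.degree = ℓ := by
      change (X ^ ℓ + (X - C (⟨B, hB⟩ : M))).degree = (ℓ : WithBot ℕ)
      rw [degree_add_eq_left_of_degree_lt, degree_X_pow]
      rw [degree_X_pow]; exact hd
    have hP0 : g P = 0 := by
      have : g P = w ^ ℓ + (w - m.of B) := by
        simp only [P, map_add, map_sub, map_pow, hgC]
        simp [g]
      rw [this]
      linear_combination hw
    have hgp : g (p₀ %ₘ P) = g p₀ := by
      have := congrArg g (modByMonic_add_div p₀ P)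
      rw [map_add, map_mul, hP0, zero_mul, add_zero] at this
      exact this
    have hpd : (p₀ %ₘ P).degree < ℓ := by
      rw [← hPd]; exact degree_modByMonic_lt _ hPm
    set p := p₀ %ₘ P
    rw [← hgp] at hz ⊢
    simp only [hcoef p hpd] at hz ⊢
    have hnd : p.natDegree ≤ J := by
      by_contra hlt
      push Not at hlt
      have h3 := hz _ hlt
      have h4 : (p.map M.subtype).natDegree = p.natDegree :=
        natDegree_map_eq_of_injective M.subtype_injective p
      rw [← h4, coeff_taylor_natDegree, leadingCoeff, h4, coeff_map] at h3
      have h5 : p.leadingCoeff = 0 := M.subtype_injective (by rw [map_zero]; exact h3)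
      rw [leadingCoeff_eq_zero] at h5
      rw [h5] at hlt
      simp at hlt
    have h4 : (p.map M.subtype).natDegree = p.natDegree :=
      natDegree_map_eq_of_injective M.subtype_injective p
    rcases hnd.lt_or_eq with h | h
    · rw [coeff_eq_zero_of_natDegree_lt (by rw [natDegree_taylor, h4]; exact h)]
      exact M.zero_mem
    · rw [← h, ← h4, coeff_taylor_natDegree, leadingCoeff, coeff_map]
      exact Subtype.coe_prop _
  · intro a ha
    refine ⟨g (C ⟨a, ha⟩ * X ^ J), ⟨_, rfl⟩, ?_⟩
    have hd : (C (⟨a, ha⟩ : M) * X ^ J).degree < (ℓ : WithBot ℕ) :=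
      lt_of_le_of_lt (degree_C_mul_X_pow_le _ _) (by exact_mod_cast hJ)
    have hd' : ((C (⟨a, ha⟩ : M) * X ^ J).map M.subtype).natDegree ≤ J := by
      simpa using natDegree_C_mul_X_pow_le a J
    simp only [hcoef _ hd]
    constructor
    · intro i hi
      exact coeff_eq_zero_of_natDegree_lt (by rw [natDegree_taylor]; omega)
    · by_cases ha0 : a = 0
      · subst ha0
        have : (⟨0, ha⟩ : M) = 0 := rfl
        simp [this]
      · have h6 : ((C (⟨a, ha⟩ : M) * X ^ J).map M.subtype).natDegree = J := by
          simpa using natDegree_C_mul_X_pow J a ha0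
        have h7 := coeff_taylor_natDegree (f := (C (⟨a, ha⟩ : M) * X ^ J).map M.subtype) (r := -e)
        rw [leadingCoeff, h6] at h7
        rw [h7]
        simp

theorem b_eq (m : Node ℓ) : m.b = m.x - m.x ^ 2 * m.u := by
  unfold b
  linear_combination m.x * m.hu

section wild

variable {K : Type u} [Field K]

/-- The `ℓ`-power map is additive in any algebra over a field of characteristic `p`. -/
theorem frob {p f : ℕ} [Fact p.Prime] [CharP K p] (hpf : ℓ = p ^ f)
    {R : Type v} [CommRing R] [Nontrivial R] (g : K →+* R) (a c : R) :
    (a - c) ^ ℓ = a ^ ℓ - c ^ ℓ := by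
  have : CharP R p := charP_of_injective_ringHom g.injective p
  subst hpf
  exact sub_pow_char_pow a c f

/-- An integral model `M` (a subring containing `O`) of a level of the tower in which `x` has a pole whose
principal part is `c / ξ`, and `u` is divisible by `ξ ^ ℓ`. This is the situation at the unramified
levels above a pole. -/
structure UState (m : Node ℓ) (ι : K →+* m.R) (O : Subring K) (c ξ : K) (M : Subring m.R) :
    Prop where
  hO : ∀ a ∈ O, ι a ∈ M
  h1 : m.x - ι (c * ξ⁻¹) ∈ M
  h2 : ι (ξ⁻¹ ^ ℓ) * m.u ∈ M

variable {m : Node ℓ} {ι : K →+* m.R} {O : Subring K} {c ξ : K} {M : Subring m.R}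

theorem UState.mul_x (h : UState m ι O c ξ M) (hc : c ∈ O) (hξ : ξ ∈ O) (hξ0 : ξ ≠ 0) :
    ι ξ * m.x ∈ M := by
  have h1 : ι ξ * m.x = ι ξ * (m.x - ι (c * ξ⁻¹)) + ι c := by
    have : ι c = ι ξ * ι (c * ξ⁻¹) := by
      rw [← map_mul]; congr 1; field_simp
    rw [this]; ring
  rw [h1]
  exact M.add_mem (M.mul_mem (h.hO _ hξ) h.h1) (h.hO _ hc)

theorem UState.x_sq (h : UState m ι O c ξ M) (hc : c ∈ O) (hξ : ξ ∈ O) (hξ0 : ξ ≠ 0) :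
    m.x ^ 2 * m.u ∈ M := by
  have h1 : m.x ^ 2 * m.u = (ι ξ * m.x) ^ 2 * ι (ξ ^ (ℓ - 2)) * (ι (ξ⁻¹ ^ ℓ) * m.u) := by
    have h2 := hℓ.out
    have : ι ξ ^ 2 * ι (ξ ^ (ℓ - 2)) * ι (ξ⁻¹ ^ ℓ) = 1 := by
      rw [← map_pow, ← map_mul, ← map_mul, ← pow_add, Nat.add_sub_cancel' h2, ← mul_pow,
        mul_inv_cancel₀ hξ0, one_pow, map_one]
    linear_combination (-(m.x ^ 2 * m.u)) * this
  rw [h1]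
  exact M.mul_mem (M.mul_mem (M.pow_mem (h.mul_x hc hξ hξ0) _) (h.hO _ (O.pow_mem hξ _))) h.h2

theorem UState.binv (h : UState m ι O c ξ M) (hc : c ∈ O) (hξ : ξ ∈ O) (hξ0 : ξ ≠ 0) :
    ι ξ⁻¹ * m.binv ∈ M := by
  obtain ⟨k, hk⟩ : ∃ k, ℓ = k + 1 := ⟨ℓ - 1, by have := hℓ.out; omega⟩
  have hg : ι ξ * ι ξ⁻¹ = 1 := by rw [← map_mul, mul_inv_cancel₀ hξ0, map_one]
  have hx := h.mul_x hc hξ hξ0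
  have h1 : ι ξ⁻¹ * ((m.x ^ (ℓ - 1) + 1) * m.u) =
      (ι (ξ⁻¹ ^ ℓ) * m.u) * ((ι ξ * m.x) ^ (ℓ - 1) + ι ξ ^ (ℓ - 1)) := by
    have h3 : ι ξ ^ (ℓ - 1) * ι ξ⁻¹ ^ (ℓ - 1) = 1 := by rw [← mul_pow, hg, one_pow]
    have h4 : ι ξ⁻¹ ^ ℓ = ι ξ⁻¹ ^ (ℓ - 1) * ι ξ⁻¹ := by
      rw [← pow_succ, Nat.sub_add_cancel (by omega)]
    rw [map_pow, h4, mul_pow]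
    linear_combination (-(ι ξ⁻¹ * m.u * (m.x ^ (ℓ - 1) + 1))) * h3
  have h2 : ι ξ⁻¹ * m.binv = ((ι ξ * m.x) ^ ℓ + (ι ξ * m.x) * ι ξ ^ (ℓ - 1)) *
      (ι ξ⁻¹ * ((m.x ^ (ℓ - 1) + 1) * m.u)) ^ (ℓ + 1) := by
    have h3 : ι ξ ^ ℓ * ι ξ⁻¹ ^ ℓ = 1 := by rw [← mul_pow, hg, one_pow]
    have h4 : ι ξ ^ ℓ = ι ξ * ι ξ ^ (ℓ - 1) := by
      rw [← pow_succ', Nat.sub_add_cancel (by omega)]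
    unfold Node.binv
    rw [mul_pow (ι ξ⁻¹), mul_pow (ι ξ), pow_succ (ι ξ⁻¹)]
    generalize ((m.x ^ (ℓ - 1) + 1) * m.u) ^ (ℓ + 1) = A
    rw [h4] at h3 ⊢
    linear_combination (-(m.x ^ ℓ + m.x) * A * ι ξ⁻¹) * h3
  rw [h2, h1]
  refine M.mul_mem (M.add_mem (M.pow_mem hx _) (M.mul_mem hx (M.pow_mem (h.hO _ hξ) _)))
    (M.pow_mem (M.mul_mem h.h2 (M.add_mem (M.pow_mem hx _) (M.pow_mem (h.hO _ hξ) _))) _)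

/-- If the pole of `b` is `c * (ξ⁻¹ ^ ℓ + ξ⁻¹)` with `c ^ ℓ = c`, it disappears after translating the
generator by `c / ξ`, which gives an integral model of the next level. -/
theorem ustate_mk {p f : ℕ} [Fact p.Prime] [CharP K p] (hpf : ℓ = p ^ f)
    (hc : c ^ ℓ = c) (hO : ∀ a ∈ O, ι a ∈ M)
    (hB : m.b - ι (c * (ξ⁻¹ ^ ℓ + ξ⁻¹)) ∈ M) (h2 : ι (ξ⁻¹ ^ ℓ) * m.binv ∈ M) :
    ∃ M' : Subring m.next.R, UState m.next (m.of.comp ι) O c ξ M' ∧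
      Tri m M.toAddSubgroup M'.toAddSubgroup := by
  obtain ⟨M', hM, hw, hT⟩ := shift m M (ι (c * ξ⁻¹)) _ hB (by
    rw [frob hpf (m.of.comp ι), ← map_pow, ← map_pow, mul_pow, hc, map_sub]
    have := m.next_x
    have h3 : ι (c * (ξ⁻¹ ^ ℓ + ξ⁻¹)) = ι (c * ξ⁻¹ ^ ℓ) + ι (c * ξ⁻¹) := by
      rw [← map_add]; congr 1; ring
    rw [h3, map_add]
    linear_combination this)
  refine ⟨M', ⟨fun a ha => hM _ (hO a ha), hw, ?_⟩, hT⟩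
  rw [m.next_u, RingHom.comp_apply, ← map_mul]
  exact hM _ h2

/-- An element `ξ` of the local ring `O` that behaves like a nonzero element of the maximal ideal:
`1 + ξ ^ (ℓ - 1)` is a unit of `O`. -/
structure ZElt (ℓ : ℕ) (O : Subring K) (ξ : K) : Prop where
  mem : ξ ∈ O
  ne : ξ ≠ 0
  ne' : 1 + ξ ^ (ℓ - 1) ≠ 0
  inv : (1 + ξ ^ (ℓ - 1))⁻¹ ∈ O

theorem pow_add_self (ξ : K) : ξ ^ ℓ + ξ = ξ * (1 + ξ ^ (ℓ - 1)) := by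
  have := hℓ.out
  rw [mul_add, ← pow_succ', Nat.sub_add_cancel (by omega)]; ring

theorem ZElt.pow_ne (h : ZElt ℓ O ξ) : ξ ^ ℓ + ξ ≠ 0 := by
  rw [pow_add_self]; exact mul_ne_zero h.ne h.ne'

theorem ZElt.inv_pow (h : ZElt ℓ O ξ) : ξ⁻¹ ^ ℓ + ξ⁻¹ = (ξ ^ ℓ * (1 + ξ ^ (ℓ - 1))⁻¹)⁻¹ := by
  have h1 := h.ne
  have h2 := h.ne'
  have h3 : ξ ^ ℓ = ξ * ξ ^ (ℓ - 1) := by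
    have := hℓ.out
    rw [← pow_succ', Nat.sub_add_cancel (by omega)]
  rw [_root_.inv_pow, h3]
  field_simp

/-- Descending the chain of zeros by one step, from `ξ` to `ξ'`, the extension stays unramified: the
principal part `c / ξ` of `x` is the principal part of `c * (ξ'⁻¹ ^ ℓ + ξ'⁻¹)`. -/
theorem ustate_next {p f : ℕ} [Fact p.Prime] [CharP K p] (hpf : ℓ = p ^ f)
    (hc : c ^ ℓ = c) (hcO : c ∈ O) (h : UState m ι O c ξ M) (hz : ZElt ℓ O ξ) {ξ' : K}
    (hz' : ZElt ℓ O ξ') (hr : ξ ^ ℓ + ξ = ξ' ^ ℓ * (1 + ξ' ^ (ℓ - 1))⁻¹) :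
    ∃ M' : Subring m.next.R, UState m.next (m.of.comp ι) O c ξ' M' ∧
      Tri m M.toAddSubgroup M'.toAddSubgroup := by
  have h2 := hℓ.out
  have e1 := hz.ne
  have e2 := hz.ne'
  have e3 := hz'.ne
  have e4 := hz'.ne'
  refine ustate_mk hpf hc h.hO ?_ ?_
  · have h3 : c * (ξ'⁻¹ ^ ℓ + ξ'⁻¹) = c * ξ⁻¹ - c * ξ ^ (ℓ - 2) * (1 + ξ ^ (ℓ - 1))⁻¹ := by
      rw [hz'.inv_pow, ← hr, pow_add_self]
      have : ξ ^ (ℓ - 1) = ξ * ξ ^ (ℓ - 2) := by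
        rw [← pow_succ']; congr 1; omega
      rw [this] at e2 ⊢
      field_simp
      ring
    rw [h3, map_sub, m.b_eq]
    rw [show m.x - m.x ^ 2 * m.u - (ι (c * ξ⁻¹) - ι (c * ξ ^ (ℓ - 2) * (1 + ξ ^ (ℓ - 1))⁻¹)) =
      (m.x - ι (c * ξ⁻¹)) - m.x ^ 2 * m.u + ι (c * ξ ^ (ℓ - 2) * (1 + ξ ^ (ℓ - 1))⁻¹) by ring]
    exact M.add_mem (M.sub_mem h.h1 (h.x_sq hcO hz.mem e1))
      (h.hO _ (O.mul_mem (O.mul_mem hcO (O.pow_mem hz.mem _)) hz.inv))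
  · have h3 : ξ'⁻¹ ^ ℓ = ((1 + ξ ^ (ℓ - 1))⁻¹ * (1 + ξ' ^ (ℓ - 1))⁻¹) * ξ⁻¹ := by
      rw [pow_add_self] at hr
      rw [_root_.inv_pow]
      field_simp
      field_simp at hr
      linear_combination hr
    rw [h3, map_mul, mul_assoc]
    exact M.mul_mem (h.hO _ (O.mul_mem hz.inv hz'.inv)) (h.binv hcO hz.mem e1)

/-- The step in which a pole appears: at `x = β + ξ` with `β ^ ℓ + β = 0` and `β ≠ 0`, the element `b` has
a pole with coefficient `β ^ (ℓ + 1)`, which is fixed by the `ℓ`-power map. -/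
theorem ustate_first {p f : ℕ} [Fact p.Prime] [CharP K p] (hpf : ℓ = p ^ f) {β : K}
    (hβ : β ^ ℓ + β = 0) (hβO : β ∈ O) (hz : ZElt ℓ O ξ) {ξ' : K}
    (hz' : ZElt ℓ O ξ') (hr : ξ ^ ℓ + ξ = ξ' ^ ℓ * (1 + ξ' ^ (ℓ - 1))⁻¹)
    (hy : (β + ξ) ^ ℓ + (β + ξ) ≠ 0) (hyO : (β + ξ)⁻¹ ∈ O) (hc : (β ^ (ℓ + 1)) ^ ℓ = β ^ (ℓ + 1)) :
    ∃ M' : Subring (fld (β + ξ) hy).next.R,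
      UState (fld (β + ξ) hy).next (fld (β + ξ) hy).of O (β ^ (ℓ + 1)) ξ' M' ∧
      Tri (fld (β + ξ) hy) O.toAddSubgroup M'.toAddSubgroup := by
  have e1 := hz.ne
  have e2 := hz.ne'
  have e3 := hz'.ne
  have e4 := hz'.ne'
  have hadd : (β + ξ) ^ ℓ = β ^ ℓ + ξ ^ ℓ := by
    have h1 := frob hpf (RingHom.id K) (β + ξ) ξ
    rw [add_sub_cancel_right] at h1
    linear_combination -h1
  have hs : (β + ξ) ^ ℓ + (β + ξ) = ξ ^ ℓ + ξ := by rw [hadd]; linear_combination hβ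
  have hy0 : β + ξ ≠ 0 := by
    intro h0
    rw [h0] at hy
    apply hy
    have := hℓ.out
    rw [zero_pow (by omega), zero_add]
  refine ustate_mk (m := fld (β + ξ) hy) (ι := RingHom.id K) hpf hc (fun a ha => ha) ?_ ?_
  · change (β + ξ) ^ (ℓ + 1) * ((β + ξ) ^ ℓ + (β + ξ))⁻¹ -
      (β ^ (ℓ + 1) * (ξ'⁻¹ ^ ℓ + ξ'⁻¹)) ∈ O
    rw [hz'.inv_pow, ← hr, hs, ← sub_mul, pow_succ, hadd]
    have h3 : ξ ^ ℓ = ξ * ξ ^ (ℓ - 1) := by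
      have := hℓ.out
      rw [← pow_succ', Nat.sub_add_cancel (by omega)]
    rw [show ((β ^ ℓ + ξ ^ ℓ) * (β + ξ) - β ^ (ℓ + 1)) * (ξ ^ ℓ + ξ)⁻¹ =
      (β ^ ℓ + ξ ^ (ℓ - 1) * (β + ξ)) * (1 + ξ ^ (ℓ - 1))⁻¹ by
        rw [pow_add_self, h3]
        field_simp
        ring]
    refine O.mul_mem (O.add_mem (O.pow_mem hβO _)
      (O.mul_mem (O.pow_mem hz.mem _) (O.add_mem hβO hz.mem))) hz.inv
  · change ξ'⁻¹ ^ ℓ * (((β + ξ) ^ ℓ + (β + ξ)) *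
      (((β + ξ) ^ (ℓ - 1) + 1) * ((β + ξ) ^ ℓ + (β + ξ))⁻¹) ^ (ℓ + 1)) ∈ O
    have h3 : (β + ξ) ^ ℓ = (β + ξ) * (β + ξ) ^ (ℓ - 1) := by
      have := hℓ.out
      rw [← pow_succ', Nat.sub_add_cancel (by omega)]
    have h4 : ((β + ξ) ^ (ℓ - 1) + 1) * ((β + ξ) ^ ℓ + (β + ξ))⁻¹ = (β + ξ)⁻¹ := by
      rw [show (β + ξ) ^ ℓ + (β + ξ) = ((β + ξ) ^ (ℓ - 1) + 1) * (β + ξ) by rw [h3]; ring] at hy ⊢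
      rw [mul_inv, ← mul_assoc, mul_inv_cancel₀ (left_ne_zero_of_mul hy), one_mul]
    rw [h4, hs, hr, ← mul_assoc, ← mul_assoc, ← mul_pow, inv_mul_cancel₀ e3, one_pow, one_mul]
    exact O.mul_mem hz'.inv (O.pow_mem hyO _)

/-- `M` is the part of order at most `E - 1` of a filtration for which `t` has order at most `-E`. This
is the situation at the totally ramified levels; it persists (`RState.next`) because orders are
multiplied by `ℓ`. -/
def RState (m : Node ℓ) (ι : K →+* m.R) (O : Subring K) (t : K) (M : AddSubgroup m.R) : Prop :=
  ∃ (Φ : Filt m) (E : ℤ), M = Φ.F (E - 1) ∧ ι t ∈ Φ.F (-E) ∧ ∀ a ∈ O, ι a ∈ Φ.F 0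

theorem RState.next {t : K} {M : AddSubgroup m.R} (h : RState m ι O t M) :
    RState m.next (m.of.comp ι) O t (m.extend M) := by
  obtain ⟨Φ, E, rfl, ht, hO⟩ := h
  refine ⟨Φ.next, ℓ * E, (Φ.next_eq_extend E).symm, ?_, ?_⟩
  · exact Φ.of_mem ht (by linarith)
  · exact fun a ha => Φ.of_mem (hO a ha) (by simp)

/-- `M` is an `O`-module, and `t * M * M` is contained in `M`. -/
def Clos (m : Node ℓ) (ι : K →+* m.R) (O : Subring K) (t : K) (M : AddSubgroup m.R) : Prop :=
  (∀ a ∈ M, ∀ c ∈ M, ι t * a * c ∈ M) ∧ ∀ o ∈ O, ∀ a ∈ M, ι o * a ∈ M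

theorem RState.clos {t : K} {M : AddSubgroup m.R} (h : RState m ι O t M) : Clos m ι O t M := by
  obtain ⟨Φ, E, rfl, ht, hO⟩ := h
  constructor
  · intro a ha c hc
    exact Φ.mono (by linarith) (Φ.mul_mem (Φ.mul_mem ht ha) hc)
  · intro o ho a ha
    exact Φ.mono (by linarith) (Φ.mul_mem (hO o ho) ha)

theorem UState.clos {t : K} (ht : t ∈ O) (h : UState m ι O c ξ M) :
    Clos m ι O t M.toAddSubgroup :=
  ⟨fun _ ha _ hc => M.mul_mem (M.mul_mem (h.hO _ ht) ha) hc,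
    fun _ ho _ ha => M.mul_mem (h.hO _ ho) ha⟩

/-- At the end of the unramified levels the `ξ`-adic filtration of the integral model is one to which the
ramified steps apply. -/
theorem UState.rstate (h : UState m ι O c ξ M) (hc : c ∈ O) (hξ : ξ ∈ O) (hξ0 : ξ ≠ 0) :
    RState m ι O ξ M.toAddSubgroup := by
  let ω : m.Rˣ := Units.map ι.toMonoidHom (Units.mk0 ξ hξ0)
  have hω : (ω : m.R) = ι ξ := rfl
  have hω' : ((ω⁻¹ : m.Rˣ) : m.R) = ι ξ⁻¹ := rfl
  have hωM : (ω : m.R) ∈ M := by rw [hω]; exact h.hO _ hξ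
  refine ⟨Filt.ofSubring M ω hωM ?_ ?_, 1, ?_, ?_, ?_⟩
  · rw [m.b_eq, hω, sub_mul]
    refine M.sub_mem ?_ (M.mul_mem (h.x_sq hc hξ hξ0) (h.hO _ hξ))
    rw [mul_comm]; exact h.mul_x hc hξ hξ0
  · rw [hω', mul_comm]; exact h.binv hc hξ hξ0
  · ext a
    rw [Filt.mem_ofSubring]
    simp
  · rw [Filt.mem_ofSubring, ← hω]
    simp
  · intro a ha
    rw [Filt.mem_ofSubring]
    simpa using h.hO a ha

end wild
end Node

/-! ### Good local subgroups above `x = 0` -/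

namespace Node
variable {ℓ : ℕ} [hℓ : Fact (2 ≤ ℓ)]

/-- A compatible sequence `ξ 0, ξ 1, …` of zeros up the tower, together with the set `Ω` of the `ℓ` roots
of `β ^ ℓ + β = 0`, all defined over the local ring `O`, where the roots stay distinct modulo the
maximal ideal. The solutions of the tower equation over `ξ i` are the `β + ξ (i + 1)` with `β ∈ Ω`. -/
structure ZeroChain (ℓ : ℕ) {K : Type u} [Field K] (O : Subring K) (Ω : Finset K)
    (ξ : ℕ → K) : Prop where
  z : ∀ i, ZElt ℓ O (ξ i)
  rel : ∀ i, ξ (i + 1) ^ ℓ + ξ (i + 1) = ξ i ^ ℓ * (1 + ξ i ^ (ℓ - 1))⁻¹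
  card : Ω.card = ℓ
  root : ∀ β ∈ Ω, β ^ ℓ + β = 0
  mem : ∀ β ∈ Ω, β ∈ O
  diff : ∀ β ∈ Ω, ∀ β' ∈ Ω, β ≠ β' → (β - β')⁻¹ ∈ O
  unit : ∀ β ∈ Ω, β ≠ 0 → ∀ i, (β + ξ i)⁻¹ ∈ O

variable {K : Type u} [Field K] {O : Subring K} {Ω : Finset K} {ξ : ℕ → K}
  {p f : ℕ} [Fact p.Prime] [CharP K p]

/-- `M` is a subgroup of the `j`-th level over `y`, triangular over `O`, and closed under
`(a, c) ↦ t * a * c` and under `O`. -/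
def Good (O : Subring K) (t : K) {y : K} (hy : y ^ ℓ + y ≠ 0) (j : ℕ)
    (M : AddSubgroup ((fld y hy).lev j).R) : Prop :=
  Chain (fld y hy) O.toAddSubgroup j M ∧ Clos ((fld y hy).lev j) ((fld y hy).inc j) O t M

theorem good_zero {y : K} (hy : y ^ ℓ + y ≠ 0) {t : K} (ht : t ∈ O) :
    Good O t hy 0 O.toAddSubgroup :=
  ⟨rfl, fun _ ha _ hc => O.mul_mem (O.mul_mem ht ha) hc, fun _ ho _ ha => O.mul_mem ho ha⟩

/-- Over `β + ξ (k + 1)` with `β ≠ 0` the tower is unramified (up to translation) for `k + 1` levels,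
using `ξ k, …, ξ 0` in turn, and totally ramified afterwards. -/
theorem good_ramified (hpf : ℓ = p ^ f) (H : ZeroChain ℓ O Ω ξ) {β : K} (hβ : β ∈ Ω)
    (hβ0 : β ≠ 0) (k : ℕ) (hy : (β + ξ (k + 1)) ^ ℓ + (β + ξ (k + 1)) ≠ 0) (J : ℕ) :
    ∃ M, Good O (ξ 0) hy J M := by
  have hc : (β ^ (ℓ + 1)) ^ ℓ = β ^ (ℓ + 1) := by
    have h1 : β ^ ℓ = -β := by linear_combination H.root β hβ
    have h2 : (-β) ^ ℓ = β := by
      have := frob hpf (RingHom.id K) 0 β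
      have h3 := hℓ.out
      rw [zero_sub, zero_pow (by omega), h1] at this
      rw [this]; ring
    rw [pow_succ, h1, mul_pow, h2, h1]; ring
  have hcO : β ^ (ℓ + 1) ∈ O := O.pow_mem (H.mem β hβ) _
  set n := fld (β + ξ (k + 1)) hy with hn
  have claim1 : ∀ j ≤ k, ∃ M : Subring (n.lev (j + 1)).R,
      UState (n.lev (j + 1)) (n.inc (j + 1)) O (β ^ (ℓ + 1)) (ξ (k - j)) M ∧
      Chain n O.toAddSubgroup (j + 1) M.toAddSubgroup := by
    intro j
    induction j with
    | zero =>
      intro _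
      obtain ⟨M, h1, h2⟩ := ustate_first hpf (H.root β hβ) (H.mem β hβ) (H.z (k + 1)) (H.z k)
        (H.rel k) hy (H.unit β hβ hβ0 (k + 1)) hc
      exact ⟨M, h1, O.toAddSubgroup, rfl, h2⟩
    | succ j ih =>
      intro hj
      obtain ⟨M, h1, h2⟩ := ih (by omega)
      have hr := H.rel (k - (j + 1))
      rw [show k - (j + 1) + 1 = k - j by omega] at hr
      obtain ⟨M', h3, h4⟩ := ustate_next hpf hc hcO h1 (H.z _) (H.z (k - (j + 1))) hr
      exact ⟨M', h3, M.toAddSubgroup, h2, h4⟩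
  have claim2 : ∀ i, ∃ M : AddSubgroup (n.lev (k + 1 + i)).R,
      RState (n.lev (k + 1 + i)) (n.inc (k + 1 + i)) O (ξ 0) M ∧
      Chain n O.toAddSubgroup (k + 1 + i) M := by
    intro i
    induction i with
    | zero =>
      obtain ⟨M, h1, h2⟩ := claim1 k le_rfl
      rw [Nat.sub_self] at h1
      exact ⟨M.toAddSubgroup, h1.rstate hcO (H.z 0).mem (H.z 0).ne, h2⟩
    | succ i ih =>
      obtain ⟨M, h1, h2⟩ := ih
      exact ⟨(n.lev (k + 1 + i)).extend M, h1.next, M, h2, tri_extend _ _⟩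
  rcases J with _ | j
  · exact ⟨_, good_zero hy (H.z 0).mem⟩
  · rcases le_or_gt j k with h | h
    · obtain ⟨M, h1, h2⟩ := claim1 j h
      exact ⟨M.toAddSubgroup, h2, h1.clos (H.z 0).mem⟩
    · obtain ⟨i, rfl⟩ := Nat.exists_eq_add_of_lt h
      obtain ⟨M, h1, h2⟩ := claim2 (i + 1)
      rw [show k + i + 1 + 1 = k + 1 + (i + 1) by omega]
      exact ⟨M, h2, h1.clos⟩

/-- Good subgroups exist over every `ξ i`. The first step over `ξ i` splits completely; the branch
`β = 0` is `ξ (i + 1)` with one level fewer, and the others are covered by `good_ramified`. -/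
theorem exists_good (hpf : ℓ = p ^ f) (H : ZeroChain ℓ O Ω ξ) (J : ℕ) (i : ℕ) :
    ∃ M, Good O (ξ 0) (H.z i).pow_ne J M := by
  classical
  induction J generalizing i with
  | zero => exact ⟨_, good_zero _ (H.z 0).mem⟩
  | succ J ih =>
    set S : Finset K := Ω.image (· + ξ (i + 1)) with hSdef
    have hval : ∀ y ∈ S, y ^ ℓ + y = ξ (i + 1) ^ ℓ + ξ (i + 1) := by
      intro y hy
      obtain ⟨β, hβ, rfl⟩ := Finset.mem_image.1 hy
      have h1 := frob hpf (RingHom.id K) (β + ξ (i + 1)) (ξ (i + 1))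
      rw [add_sub_cancel_right] at h1
      linear_combination H.root β hβ - h1
    have hS : ∀ y ∈ S, y ^ ℓ + y ≠ 0 := fun y hy => by
      rw [hval y hy]; exact (H.z (i + 1)).pow_ne
    have hr : ∀ y ∈ S, y ^ ℓ + y = (fld (ξ i) (H.z i).pow_ne).b := by
      intro y hy
      rw [hval y hy, H.rel i]
      change _ = ξ i ^ (ℓ + 1) * (ξ i ^ ℓ + ξ i)⁻¹
      rw [pow_add_self, pow_succ, mul_inv, mul_assoc, ← mul_assoc (ξ i),
        mul_inv_cancel₀ (H.z i).ne, one_mul]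
    have hc : S.card = ℓ := by
      rw [hSdef, Finset.card_image_of_injective _ (add_left_injective _), H.card]
    have hSO : ∀ y ∈ S, y ∈ O := by
      intro y hy
      obtain ⟨β, hβ, rfl⟩ := Finset.mem_image.1 hy
      exact O.add_mem (H.mem β hβ) (H.z _).mem
    have hd : ∀ y ∈ S, ∀ y' ∈ S, y ≠ y' → (y - y')⁻¹ ∈ O := by
      intro y hy y' hy' hne
      obtain ⟨β, hβ, rfl⟩ := Finset.mem_image.1 hy
      obtain ⟨β', hβ', rfl⟩ := Finset.mem_image.1 hy'
      rw [add_sub_add_right_eq_sub]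
      exact H.diff β hβ β' hβ' fun h => hne (by rw [h])
    have hM : ∀ y : S, ∃ M, Good O (ξ 0) (hS y y.2) J M := by
      rintro ⟨y, hy⟩
      obtain ⟨β, hβ, rfl⟩ := Finset.mem_image.1 hy
      by_cases hβ0 : β = 0
      · have key : ∀ (y : K) (h : y ^ ℓ + y ≠ 0), y = ξ (i + 1) → ∃ M, Good O (ξ 0) h J M := by
          rintro y h rfl
          exact ih (i + 1)
        exact key _ _ (by change β + ξ (i + 1) = ξ (i + 1); rw [hβ0, zero_add])
      · exact good_ramified hpf H hβ hβ0 i (hS _ hy) J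
    choose M hM using hM
    refine ⟨_, chain_split O hS hr hc hSO hd J M fun y => (hM y).1, ?_, ?_⟩
    · intro a ha b hb
      rw [AddSubgroup.mem_iInf] at *
      intro y
      have h1 := (hM y).2.1 _ (ha y) _ (hb y)
      have h2 := spl_inc hS hr y J (ξ 0)
      change (spl hS hr y J).f ((fld (ξ i) (H.z i).pow_ne).inc (J + 1) (ξ 0) * a * b) ∈ M y
      rw [map_mul, map_mul, h2]
      exact h1
    · intro o ho a ha
      rw [AddSubgroup.mem_iInf] at *
      intro y
      have h1 := (hM y).2.2 o ho _ (ha y)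
      have h2 := spl_inc hS hr y J o
      change (spl hS hr y J).f ((fld (ξ i) (H.z i).pow_ne).inc (J + 1) o * a) ∈ M y
      rw [map_mul, h2]
      exact h1

end Node

/-! ### Rational points, and the zeros above `x = 0` -/

namespace Node
variable {ℓ : ℕ} [hℓ : Fact (2 ≤ ℓ)]

section finite

variable {k : Type u} [Field k] [Fintype k] [DecidableEq k]
  {p f : ℕ} [Fact p.Prime] [CharP k p]

theorem add_pow_ell (hpf : ℓ = p ^ f) (a c : k) : (a + c) ^ ℓ = a ^ ℓ + c ^ ℓ := by
  subst hpf
  exact add_pow_char_pow a c p f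

/-- The trace `y ↦ y ^ ℓ + y` from the field with `ℓ ^ 2` elements to the one with `ℓ` elements. -/
def tr (hpf : ℓ = p ^ f) : k →+ k where
  toFun y := y ^ ℓ + y
  map_zero' := by have := hℓ.out; simp; omega
  map_add' a c := by rw [add_pow_ell hpf]; ring

theorem card_roots_le {P : k[X]} (hP : P.Monic) (hd : P.natDegree = ℓ) (s : Finset k)
    (hs : ∀ y ∈ s, P.eval y = 0) : s.card ≤ ℓ := by
  rw [← hd]
  exact card_le_degree_of_subset_roots fun y hy => by
    rw [mem_roots hP.ne_zero]; exact hs y hy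

/-- The trace has a kernel of order `ℓ` and is onto the elements fixed by the `ℓ`-power map. -/
theorem tr_ker_card (hpf : ℓ = p ^ f) (hk : Fintype.card k = ℓ ^ 2) :
    (Finset.univ.filter fun y : k => y ^ ℓ + y = 0).card = ℓ ∧
      ∀ z : k, z ^ ℓ = z → ∃ y : k, y ^ ℓ + y = z := by
  have h2 := hℓ.out
  set A := Finset.univ.filter fun y : k => y ^ ℓ + y = 0
  set B := Finset.univ.filter fun z : k => z ^ ℓ = z
  have hlt : (X : k[X]).degree < (ℓ : WithBot ℕ) := by
    rw [degree_X]; exact_mod_cast h2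
  have hA : A.card ≤ ℓ := by
    refine card_roots_le (P := X ^ ℓ + X) (monic_X_pow_add hlt)
      (natDegree_eq_of_degree_eq_some ?_) A fun y hy => ?_
    · rw [degree_add_eq_left_of_degree_lt, degree_X_pow]
      rw [degree_X_pow]; exact hlt
    · simpa using (Finset.mem_filter.1 hy).2
  have hB : B.card ≤ ℓ := by
    refine card_roots_le (P := X ^ ℓ - X) (monic_X_pow_sub hlt)
      (natDegree_eq_of_degree_eq_some ?_) B fun y hy => ?_
    · rw [degree_sub_eq_left_of_degree_lt, degree_X_pow]
      rw [degree_X_pow]; exact hlt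
    · simp [(Finset.mem_filter.1 hy).2]
  have hfib : ∀ z ∈ B, (Finset.univ.filter fun y : k => y ^ ℓ + y = z).card ≤ A.card := by
    intro z _
    rcases (Finset.univ.filter fun y : k => y ^ ℓ + y = z).eq_empty_or_nonempty with h | ⟨y₀, hy₀⟩
    · rw [h]; simp
    · refine Finset.card_le_card_of_injOn (fun y => y - y₀) (fun y hy => ?_)
        (fun a _ c _ h => by simpa using h)
      have h1 := (Finset.mem_filter.1 hy).2
      have h3 := (Finset.mem_filter.1 hy₀).2
      have h4 := (tr (k := k) hpf).map_sub y y₀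
      change (y - y₀) ^ ℓ + (y - y₀) = (y ^ ℓ + y) - (y₀ ^ ℓ + y₀) at h4
      simp only [A, Finset.coe_filter, Finset.mem_univ, true_and, Set.mem_ofPred_eq]
      rw [h4, h1, h3, sub_self]
  have hmaps : ∀ y ∈ (Finset.univ : Finset k), y ^ ℓ + y ∈ B := by
    intro y _
    simp only [B, Finset.mem_filter, Finset.mem_univ, true_and]
    rw [add_pow_ell hpf, ← pow_mul, ← sq, ← hk, FiniteField.pow_card]
    ring
  have hsum := Finset.card_eq_sum_card_fiberwise hmaps
  rw [Finset.card_univ, hk] at hsum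
  -- every fibre has at most `ℓ` elements and there are at most `ℓ` of them
  have hle : ℓ ^ 2 ≤ B.card * A.card := by
    rw [hsum]
    exact (Finset.sum_le_card_nsmul _ _ _ hfib).trans (by simp)
  have hAe : A.card = ℓ := by nlinarith
  refine ⟨hAe, fun z hz => ?_⟩
  by_contra hne
  push Not at hne
  have hzB : z ∈ B := by simp [B, hz]
  have hempty : (Finset.univ.filter fun y : k => y ^ ℓ + y = z).card = 0 := by
    rw [Finset.card_eq_zero, Finset.filter_eq_empty_iff]
    intro y _; exact hne y
  have : ℓ ^ 2 ≤ (B.card - 1) * A.card := by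
    rw [hsum, ← Finset.sum_erase _ (a := z) hempty, ← Finset.card_erase_of_mem hzB]
    exact (Finset.sum_le_card_nsmul _ _ _ fun z hz => hfib z (Finset.mem_of_mem_erase hz)).trans
      (by simp)
  rw [hAe] at this
  have h5 : B.card - 1 ≤ ℓ - 1 := by omega
  have h6 : (B.card - 1) * ℓ ≤ (ℓ - 1) * ℓ := Nat.mul_le_mul_right _ h5
  have h7 : (ℓ - 1) * ℓ < ℓ ^ 2 := by
    rw [sq]; exact Nat.mul_lt_mul_of_pos_right (by omega) (by omega)
  omega

theorem card_fiber (hpf : ℓ = p ^ f) (hk : Fintype.card k = ℓ ^ 2) {z : k} (hz : z ^ ℓ = z) :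
    (Finset.univ.filter fun y : k => y ^ ℓ + y = z).card = ℓ := by
  obtain ⟨h1, h2⟩ := tr_ker_card (k := k) hpf hk
  obtain ⟨y₀, hy₀⟩ := h2 z hz
  refine (Finset.card_bij (fun y _ => y - y₀) ?_ ?_ ?_).trans h1
  · intro y hy
    have h3 := (Finset.mem_filter.1 hy).2
    have h4 := (tr (k := k) hpf).map_sub y y₀
    change (y - y₀) ^ ℓ + (y - y₀) = (y ^ ℓ + y) - (y₀ ^ ℓ + y₀) at h4
    simp only [Finset.mem_filter, Finset.mem_univ, true_and]
    rw [h4, h3, hy₀, sub_self]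
  · intro a _ c _ h
    simpa using h
  · intro y hy
    have h3 := (Finset.mem_filter.1 hy).2
    refine ⟨y + y₀, ?_, by simp⟩
    simp only [Finset.mem_filter, Finset.mem_univ, true_and]
    rw [add_pow_ell hpf]
    linear_combination h3 + hy₀

/-- The right-hand side of the tower equation is norm over trace, hence fixed by the `ℓ`-power map. -/
theorem norm_trace (hpf : ℓ = p ^ f) (hk : Fintype.card k = ℓ ^ 2) {a : k} (ha : a ^ ℓ + a ≠ 0) :
    (fld a ha).b ^ ℓ = (fld a ha).b := by
  have h3 : (a ^ ℓ) ^ ℓ = a := by rw [← pow_mul, ← sq, ← hk, FiniteField.pow_card]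
  change (a ^ (ℓ + 1) * (a ^ ℓ + a)⁻¹) ^ ℓ = a ^ (ℓ + 1) * (a ^ ℓ + a)⁻¹
  rw [mul_pow, inv_pow, add_pow_ell hpf, pow_succ, mul_pow, h3, mul_comm a, add_comm a]

/-- Above a point `a` of nonzero trace the tower splits completely over `k`: level `j` is evaluated
faithfully at `ℓ ^ j` rational points. -/
theorem exists_points (hpf : ℓ = p ^ f) (hk : Fintype.card k = ℓ ^ 2) (j : ℕ) (a : k)
    (ha : a ^ ℓ + a ≠ 0) :
    ∃ g : ((fld a ha).lev j).R →+* (Fin (ℓ ^ j) → k), Function.Injective g ∧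
      ∀ c, g ((fld a ha).inc j c) = fun _ => c := by
  induction j generalizing a with
  | zero =>
    refine ⟨RingHom.pi fun _ => RingHom.id k, ?_, fun c => rfl⟩
    intro x y h
    exact congrFun h 0
  | succ j ih =>
    set S := Finset.univ.filter fun y : k => y ^ ℓ + y = (fld a ha).b with hSdef
    have hr : ∀ y ∈ S, y ^ ℓ + y = (fld a ha).b := fun y hy => (Finset.mem_filter.1 hy).2
    have hb : (fld a ha).b ≠ 0 := left_ne_zero_of_mul_eq_one (fld a ha).b_mul_binv
    have hS : ∀ y ∈ S, y ^ ℓ + y ≠ 0 := fun y hy => by rw [hr y hy]; exact hb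
    have hc : S.card = ℓ := card_fiber hpf hk (norm_trace hpf hk ha)
    choose g hg hgc using fun y : S => ih y.1 (hS y y.2)
    have e : Fin (ℓ ^ (j + 1)) ≃ S × Fin (ℓ ^ j) := by
      apply Fintype.equivOfCardEq
      simp [hc, pow_succ']
    refine ⟨RingHom.pi fun i => (Pi.evalRingHom _ (e i).2).comp
      ((g (e i).1).comp (spl hS hr (e i).1 j).f), ?_, ?_⟩
    · rw [injective_iff_map_eq_zero]
      intro z hz
      refine spl_inj hS hr hc j fun y => hg y ?_
      rw [map_zero]
      funext i
      have h0 : ∀ s : S × Fin (ℓ ^ j), g s.1 ((spl hS hr s.1 j).f z) s.2 = 0 := by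
        intro s
        obtain ⟨i, rfl⟩ := e.surjective s
        exact congrFun hz i
      exact h0 (y, i)
    · intro c
      funext i
      have := hgc (e i).1 c
      change g (e i).1 ((spl hS hr (e i).1 j).f ((fld a ha).inc (j + 1) c)) (e i).2 = c
      rw [spl_inc, this]

end finite

section laurent

variable {k : Type u} [Field k]

/-- A zero `ζ` lifts to a zero `ζ'` of the next step, by Hensel's lemma for `Y ^ ℓ + Y - b` at `0`. -/
theorem exists_zero_step (ζ : PowerSeries k) (h0 : PowerSeries.constantCoeff ζ = 0) (hne : ζ ≠ 0) :
    ∃ ζ' : PowerSeries k, PowerSeries.constantCoeff ζ' = 0 ∧ ζ' ≠ 0 ∧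
      (ζ' ^ ℓ + ζ') * (1 + ζ ^ (ℓ - 1)) = ζ ^ ℓ := by
  have h2 := hℓ.out
  have hu : IsUnit (1 + ζ ^ (ℓ - 1)) := by
    rw [PowerSeries.isUnit_iff_constantCoeff]
    simp [h0, zero_pow (by omega : ℓ - 1 ≠ 0)]
  obtain ⟨w, hw⟩ := hu.exists_left_inv
  set a := ζ ^ ℓ * w with ha
  have ha0 : PowerSeries.constantCoeff a = 0 := by simp [ha, h0, zero_pow (by omega : ℓ ≠ 0)]
  have hmem : ∀ g : PowerSeries k, g ∈ Ideal.span {(PowerSeries.X : PowerSeries k)} ↔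
      PowerSeries.constantCoeff g = 0 := by
    intro g
    rw [Ideal.mem_span_singleton, PowerSeries.X_dvd_iff]
  let P : (PowerSeries k)[X] := X ^ ℓ + (X - C a)
  have hd : (X - C a).degree < (ℓ : WithBot ℕ) := by
    rw [degree_X_sub_C]; exact_mod_cast h2
  have := HenselianRing.is_henselian (I := Ideal.span {(PowerSeries.X : PowerSeries k)}) P
    (monic_X_pow_add hd) 0 (by
      rw [hmem]; simp [P, zero_pow (by omega : ℓ ≠ 0), ha0]) (by
      have : (derivative P).eval 0 = 1 := by
        simp [P, derivative_X_pow, zero_pow (by omega : ℓ - 1 ≠ 0)]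
      rw [this, map_one]; exact isUnit_one)
  obtain ⟨ζ', hroot, h1⟩ := this
  rw [sub_zero, hmem] at h1
  have h3 : ζ' ^ ℓ + ζ' = a := by
    have : ζ' ^ ℓ + (ζ' - a) = 0 := by simpa [P, IsRoot] using hroot
    linear_combination this
  refine ⟨ζ', h1, ?_, ?_⟩
  · rintro rfl
    rw [zero_pow (by omega), zero_add] at h3
    have h4 : ζ ^ ℓ = 0 := by
      calc ζ ^ ℓ = a * (1 + ζ ^ (ℓ - 1)) := by rw [ha, mul_assoc, hw, mul_one]
        _ = 0 := by rw [← h3, zero_mul]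
    exact hne (pow_eq_zero_iff (by omega) |>.1 h4)
  · rw [h3, ha, mul_assoc, hw, mul_one]

/-- The zeros `ξ i` over `x = X`, as power series without constant term. -/
noncomputable def zseq (ℓ : ℕ) [Fact (2 ≤ ℓ)] (k : Type u) [Field k] :
    ℕ → {ζ : PowerSeries k // PowerSeries.constantCoeff ζ = 0 ∧ ζ ≠ 0}
  | 0 => ⟨PowerSeries.X, by simp, PowerSeries.X_ne_zero⟩
  | i + 1 =>
    ⟨(exists_zero_step (ℓ := ℓ) (zseq ℓ k i).1 (zseq ℓ k i).2.1 (zseq ℓ k i).2.2).choose,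
      (exists_zero_step (ℓ := ℓ) (zseq ℓ k i).1 (zseq ℓ k i).2.1 (zseq ℓ k i).2.2).choose_spec.1,
      (exists_zero_step (ℓ := ℓ) (zseq ℓ k i).1 (zseq ℓ k i).2.1 (zseq ℓ k i).2.2).choose_spec.2.1⟩

theorem zseq_rel (i : ℕ) : ((zseq ℓ k (i + 1)).1 ^ ℓ + (zseq ℓ k (i + 1)).1) *
    (1 + (zseq ℓ k i).1 ^ (ℓ - 1)) = (zseq ℓ k i).1 ^ ℓ :=
  (exists_zero_step (ℓ := ℓ) (zseq ℓ k i).1 (zseq ℓ k i).2.1 (zseq ℓ k i).2.2).choose_spec.2.2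

/-- Power series as Laurent series; its range is the local ring at `x = 0`. -/
noncomputable abbrev ps (k : Type u) [Field k] : PowerSeries k →+* LaurentSeries k :=
  algebraMap (PowerSeries k) (LaurentSeries k)

theorem ps_inj : Function.Injective (ps k) := by
  have := LaurentSeries.of_powerSeries_localization (R := k)
  exact IsLocalization.injective (LaurentSeries k) (M := Submonoid.powers (PowerSeries.X : PowerSeries k))
    (powers_le_nonZeroDivisors_of_noZeroDivisors PowerSeries.X_ne_zero)

theorem ps_unit {g : PowerSeries k} (h : PowerSeries.constantCoeff g ≠ 0) :
    (ps k g)⁻¹ ∈ (ps k).range := by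
  have hu : IsUnit g := by
    rw [PowerSeries.isUnit_iff_constantCoeff]; exact isUnit_iff_ne_zero.2 h
  obtain ⟨w, hw⟩ := hu.exists_right_inv
  refine ⟨w, ?_⟩
  have := congrArg (ps k) hw
  rw [map_mul, map_one] at this
  exact (inv_eq_of_mul_eq_one_right this).symm

theorem ps_X_ne : ps k PowerSeries.X ≠ 0 := by
  rw [Ne, map_eq_zero_iff _ ps_inj]; exact PowerSeries.X_ne_zero

theorem ps_surj (c : LaurentSeries k) : ∃ (d : ℕ) (g : PowerSeries k),
    c * ps k PowerSeries.X ^ d = ps k g := by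
  have := LaurentSeries.of_powerSeries_localization (R := k)
  obtain ⟨⟨g, ⟨_, d, rfl⟩⟩, h⟩ :=
    IsLocalization.surj (Submonoid.powers (PowerSeries.X : PowerSeries k)) c
  refine ⟨d, g, ?_⟩
  rw [← map_pow]; exact h

theorem zeroChain [Fintype k] [DecidableEq k] [DecidableEq (LaurentSeries k)]
    {p f : ℕ} [Fact p.Prime] [CharP k p]
    (hpf : ℓ = p ^ f) (hk : Fintype.card k = ℓ ^ 2) :
    ZeroChain ℓ (ps k).range
      ((Finset.univ.filter fun y : k => y ^ ℓ + y = 0).image fun y => ps k (PowerSeries.C y))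
      fun i => ps k (zseq ℓ k i).1 := by
  have h2 := hℓ.out
  have hne : ∀ i, PowerSeries.constantCoeff (1 + (zseq ℓ k i).1 ^ (ℓ - 1)) ≠ 0 := by
    intro i
    simp [(zseq ℓ k i).2.1, zero_pow (by omega : ℓ - 1 ≠ 0)]
  have hne' : ∀ i, ps k (1 + (zseq ℓ k i).1 ^ (ℓ - 1)) ≠ 0 := by
    intro i h
    rw [map_eq_zero_iff _ ps_inj] at h
    exact hne i (by rw [h, map_zero])
  have hinj : Function.Injective fun y : k => ps k (PowerSeries.C y) :=
    ps_inj.comp PowerSeries.C_injective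
  refine ⟨fun i => ⟨⟨_, rfl⟩, ?_, ?_, ?_⟩, fun i => ?_, ?_, ?_, ?_, ?_, ?_⟩
  · rw [Ne, map_eq_zero_iff _ ps_inj]; exact (zseq ℓ k i).2.2
  · simpa using hne' i
  · simpa using ps_unit (hne i)
  · have := congrArg (ps k) (zseq_rel (ℓ := ℓ) (k := k) i)
    have h3 := hne' i
    simp only [map_mul, map_add, map_pow, map_one] at this h3
    rw [eq_mul_inv_iff_mul_eq₀ h3]
    exact this
  · rw [Finset.card_image_of_injective _ hinj]
    exact (tr_ker_card hpf hk).1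
  · intro β hβ
    obtain ⟨y, hy, rfl⟩ := Finset.mem_image.1 hβ
    rw [← map_pow, ← map_pow, ← map_add, ← map_add, (Finset.mem_filter.1 hy).2, map_zero, map_zero]
  · intro β hβ
    obtain ⟨y, hy, rfl⟩ := Finset.mem_image.1 hβ
    exact ⟨_, rfl⟩
  · intro β hβ β' hβ' hne
    obtain ⟨y, hy, rfl⟩ := Finset.mem_image.1 hβ
    obtain ⟨y', hy', rfl⟩ := Finset.mem_image.1 hβ'
    rw [← map_sub]
    apply ps_unit
    simp only [map_sub, PowerSeries.constantCoeff_C]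
    intro h
    exact hne (by rw [sub_eq_zero.1 h])
  · intro β hβ hβ0 i
    obtain ⟨y, hy, rfl⟩ := Finset.mem_image.1 hβ
    rw [← map_add]
    apply ps_unit
    simp only [map_add, PowerSeries.constantCoeff_C, (zseq ℓ k i).2.1, add_zero]
    rintro rfl
    simp at hβ0

end laurent
end Node

/-! ### Passing from the bottom of the tower to level `j` -/

namespace Node
variable {ℓ : ℕ} [hℓ : Fact (2 ≤ ℓ)]

/-- The elements of the `j`-th level all of whose coordinates over the bottom lie in `V`. -/
noncomputable def extendLev (n : Node ℓ) (V : AddSubgroup n.R) : ∀ j, AddSubgroup (n.lev j).R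
  | 0 => V
  | j + 1 => (n.lev j).extend (extendLev n V j)

/-- The filtration induced on the `j`-th level. -/
noncomputable def Filt.lev {n : Node ℓ} (Φ : Filt n) : ∀ j, Filt (n.lev j)
  | 0 => Φ
  | j + 1 => (Filt.lev Φ j).next

theorem extendLev_mul {n : Node ℓ} {V : AddSubgroup n.R} {a : n.R} (h : ∀ c ∈ V, a * c ∈ V) (j : ℕ) :
    ∀ c ∈ n.extendLev V j, n.inc j a * c ∈ n.extendLev V j := by
  induction j with
  | zero => exact h
  | succ j ih =>
    intro c hc i hi
    rw [inc_succ, coef_of_mul _ _ _ hi]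
    exact ih _ (hc i hi)

theorem Filt.lev_inc_mem {n : Node ℓ} {Φ : Filt n} {a : n.R} {s : ℤ} (h : a ∈ Φ.F s) (j : ℕ) :
    n.inc j a ∈ (Φ.lev j).F (s * ℓ ^ j) := by
  induction j with
  | zero =>
    rw [pow_zero, mul_one]
    exact h
  | succ j ih =>
    rw [inc_succ]
    refine (Φ.lev j).of_mem ih ?_
    rw [pow_succ]; linarith

theorem Filt.Strict.lev {n : Node ℓ} {Φ : Filt n} (h : Φ.Strict) (j : ℕ) : (Φ.lev j).Strict := by
  induction j with
  | zero => exact h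
  | succ j ih => exact ih.next

theorem extendLev_filt {n : Node ℓ} {V : AddSubgroup n.R} (Φ : Filt n) (hV : V = Φ.F 0) (j : ℕ) :
    n.extendLev V j = (Φ.lev j).F (ℓ ^ j - 1) := by
  induction j with
  | zero => simpa [extendLev, Filt.lev] using hV
  | succ j ih =>
    have h1 := (Φ.lev j).next_eq_extend (ℓ ^ j)
    rw [← ih, ← pow_succ'] at h1
    exact h1.symm

/-- For `V = Φ.F 0` the subgroup `extendLev V j` is the part of order at most `ℓ ^ j - 1`, and an `ω` of
order `-1` acquires order `-ℓ ^ j`, enough to absorb a second factor. -/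
theorem extendLev_clos {n : Node ℓ} {V : AddSubgroup n.R} {ω : n.R} (Φ : Filt n) (hV : V = Φ.F 0)
    (hω : ω ∈ Φ.F (-1)) (j : ℕ) {a c : (n.lev j).R} (ha : a ∈ n.extendLev V j)
    (hc : c ∈ n.extendLev V j) : n.inc j ω * a * c ∈ n.extendLev V j := by
  have h1 := Filt.lev_inc_mem hω j
  rw [extendLev_filt Φ hV] at *
  refine (Φ.lev j).mono ?_ ((Φ.lev j).mul_mem ((Φ.lev j).mul_mem h1 ha) hc)
  linarith

/-- The map `θ` identifies `P` with a complement of `M`. With `P` the global sections vanishing at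
infinity and `M` the local conditions at the other place, this says that both cohomology groups of
the divisor are zero. -/
def Compl {m m' : Node ℓ} (θ : NHom m m') (P : AddSubgroup m.R) (M : AddSubgroup m'.R) : Prop :=
  (∀ g, ∃ p ∈ P, g - θ.f p ∈ M) ∧ ∀ p ∈ P, θ.f p ∈ M → p = 0

/-- Complementarity passes to a triangular `M'` over `M`, one coordinate at a time from the top one
down. -/
theorem Compl.next {m m' : Node ℓ} {θ : NHom m m'} {P : AddSubgroup m.R} {M : AddSubgroup m'.R}
    {M' : AddSubgroup m'.next.R} (h : Compl θ P M) (hT : Tri m' M M') :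
    Compl θ.next (m.extend P) M' := by
  constructor
  · have key : ∀ J ≤ ℓ, ∀ g : m'.next.R, (∀ i, J ≤ i → m'.coef i g = 0) →
        ∃ p ∈ m.extend P, g - θ.next.f p ∈ M' := by
      intro J
      induction J with
      | zero =>
        intro _ g hg
        refine ⟨0, AddSubgroup.zero_mem _, ?_⟩
        have : g = 0 := m'.ext fun i _ => by rw [hg i (Nat.zero_le _), map_zero]
        simp [this, M'.zero_mem]
      | succ J ih =>
        intro hJ g hg
        obtain ⟨p, hp, hgp⟩ := h.1 (m'.coef J g)
        obtain ⟨z, hz, hz1, hz2⟩ := (hT J (by omega)).2 _ hgp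
        have hco : ∀ i, m'.coef i (θ.next.f (m.of p * m.next.x ^ J)) =
            if i = J then θ.f p else 0 := by
          intro i
          rw [θ.coef_next, m.coef_mul_pow _ (by omega)]
          split_ifs <;> simp
        obtain ⟨p', hp', h'⟩ := ih (by omega) (g - θ.next.f (m.of p * m.next.x ^ J) - z) (by
          intro i hi
          rw [map_sub, map_sub, hco]
          rcases hi.eq_or_lt with rfl | hi
          · rw [if_pos rfl, hz2, sub_self]
          · rw [if_neg (by omega), hz1 i hi, hg i hi]; simp)
        refine ⟨m.of p * m.next.x ^ J + p', AddSubgroup.add_mem _ ?_ hp', ?_⟩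
        · intro i _
          rw [m.coef_mul_pow _ (by omega)]
          split_ifs
          · exact hp
          · exact P.zero_mem
        · have := M'.add_mem h' hz
          rw [map_add]
          convert this using 1
          ring
    exact fun g => key ℓ le_rfl g fun i hi => m'.coef_ge g hi
  · intro p hp hM
    have key : ∀ d i, ℓ ≤ i + d → m.coef i p = 0 := by
      intro d
      induction d with
      | zero => exact fun i hi => m.coef_ge p (by omega)
      | succ d ih =>
        intro i hi
        rcases lt_or_ge i ℓ with h1 | h1
        · refine h.2 _ (hp i h1) ?_
          rw [← θ.coef_next]
          refine (hT i h1).1 _ hM fun i' hi' => ?_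
          rw [θ.coef_next, ih i' (by omega), map_zero]
        · exact m.coef_ge p h1
    exact m.ext fun i _ => by rw [key ℓ i (by omega), map_zero]

theorem Compl.lev {n n' : Node ℓ} {θ : NHom n n'} {V : AddSubgroup n.R} {Φ : Filt n}
    {O : AddSubgroup n'.R} (h : Compl θ (V ⊓ Φ.F (-1)) O) (j : ℕ) {M : AddSubgroup (n'.lev j).R}
    (hM : Chain n' O j M) :
    Compl (θ.lev j) (n.extendLev V j ⊓ (Φ.lev j).F (-1)) M := by
  induction j with
  | zero => obtain rfl := hM; exact h
  | succ j ih =>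
    obtain ⟨M₁, h1, h2⟩ := hM
    have h3 := (ih h1).next h2
    suffices h5 : n.extendLev V (j + 1) ⊓ (Φ.lev (j + 1)).F (-1) =
        (n.lev j).extend (n.extendLev V j ⊓ (Φ.lev j).F (-1)) by
      rw [h5]; exact h3
    ext z
    have h4 := (Φ.lev j).next_eq_extend 0
    rw [mul_zero, zero_sub] at h4
    change (z ∈ (n.lev j).extend (n.extendLev V j) ∧ z ∈ (Φ.lev j).next.F (-1)) ↔ _
    rw [h4]
    exact ⟨fun h i hi => ⟨h.1 i hi, h.2 i hi⟩, fun h => ⟨fun i hi => (h i hi).1, fun i hi => (h i hi).2⟩⟩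

/-- Every order `i ≥ 0` at infinity is attained on level `j` if it is attained at the bottom: use
`b * y ^ e` with `i = ℓ * r + e`. -/
theorem lead_lev {n : Node ℓ} {V : AddSubgroup n.R} {Φ : Filt n}
    (h : ∀ i : ℕ, ∃ b ∈ V, b ∈ Φ.F i ∧ b ∉ Φ.F (i - 1)) (j i : ℕ) :
    ∃ b ∈ n.extendLev V j, b ∈ (Φ.lev j).F i ∧ b ∉ (Φ.lev j).F (i - 1) := by
  have h2 := hℓ.out
  induction j generalizing i with
  | zero => exact h i
  | succ j ih =>
    obtain ⟨b, hb, hb1, hb2⟩ := ih (i / ℓ)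
    have he : i % ℓ < ℓ := Nat.mod_lt _ (by omega)
    have hi : (ℓ : ℤ) * ((i / ℓ : ℕ) : ℤ) + ((i % ℓ : ℕ) : ℤ) = i := by
      exact_mod_cast Nat.div_add_mod i ℓ
    refine ⟨(n.lev j).of b * (n.lev j).next.x ^ (i % ℓ), ?_, ?_, ?_⟩
    · intro e _
      rw [coef_mul_pow _ _ he]
      split_ifs
      · exact hb
      · exact AddSubgroup.zero_mem _
    · exact (Φ.lev j).pow_mem b hb1 _ hi.le
    · have := (Φ.lev j).lead_not_mem he hb2
      rwa [hi] at this

/-- Divisibility by `z` of the elements that vanish at all the points is inherited by each level,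
coordinatewise. -/
theorem divis_lev {n : Node ℓ} {V : AddSubgroup n.R} {Φ : Filt n} {G : Type v} {n' : G → Node ℓ}
    (e : ∀ a, NHom n (n' a)) {z : n.R} {N : ℕ}
    (h : ∀ (s : ℤ), ∀ c ∈ V, c ∈ Φ.F s → (∀ a, (e a).f c = 0) →
      ∃ h ∈ V, h ∈ Φ.F (s - N) ∧ c = z * h) (j : ℕ) (s : ℤ) :
    ∀ c ∈ n.extendLev V j, c ∈ (Φ.lev j).F s → (∀ a, ((e a).lev j).f c = 0) →
      ∃ h ∈ n.extendLev V j, h ∈ (Φ.lev j).F (s - N * ℓ ^ j) ∧ c = n.inc j z * h := by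
  induction j generalizing s with
  | zero =>
    rw [pow_zero, mul_one]
    exact h s
  | succ j ih =>
    intro c hc hcF hce
    have : ∀ i, ∃ h, i < ℓ → h ∈ n.extendLev V j ∧ h ∈ (Φ.lev j).F ((s - i) / ℓ - N * ℓ ^ j) ∧
        (n.lev j).coef i c = n.inc j z * h := by
      intro i
      by_cases hi : i < ℓ
      · obtain ⟨h, h1⟩ := ih ((s - i) / ℓ) ((n.lev j).coef i c) (hc i hi) (hcF i hi) (by
          intro a
          rw [← ((e a).lev j).coef_next]
          have := hce a
          rw [NHom.lev_succ] at this
          rw [this, map_zero])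
        exact ⟨h, fun _ => h1⟩
      · exact ⟨0, fun h => absurd h hi⟩
    choose h hh using this
    have hp := Filt.ell_pos (ℓ := ℓ)
    refine ⟨∑ i ∈ Finset.range ℓ, (n.lev j).of (h i) * (n.lev j).next.x ^ i, ?_, ?_, ?_⟩
    · intro i hi
      rw [(n.lev j).coef_sum _ hi]
      exact (hh i hi).1
    · intro i hi
      rw [(n.lev j).coef_sum _ hi]
      convert (hh i hi).2.1 using 2
      rw [show s - N * (ℓ : ℤ) ^ (j + 1) - i = (s - i) + ℓ * (-(N * ℓ ^ j)) by ring,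
        Int.add_mul_ediv_left _ _ hp.ne']
      ring
    · refine (n.lev j).ext fun i hi => ?_
      rw [inc_succ, coef_of_mul _ _ _ hi, (n.lev j).coef_sum _ hi]
      exact (hh i hi).2.2

end Node

/-! ### Evaluation codes -/

/-- An abstract evaluation code of length `N` on a curve with coordinate ring `R`: `F s` are the
functions with pole order at most `s` at infinity, `L` is the union over `s` of the Riemann–Roch
spaces of `D + s ∞`, where `D - ∞` is nonspecial without sections (`neg`, `lead`), `ev` is the
evaluation at `N` points, injective on pole order below `N` (`inj`), and `ω` is a function of pole
order at most `e` with `ω * L * L ⊆ L`. -/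
structure EvalData (k : Type u) [Field k] (R : Type v) [CommRing R] (N e : ℕ) where
  F : ℤ → AddSubgroup R
  L : AddSubgroup R
  ι : k →+* R
  ev : R →+* (Fin N → k)
  ω : R
  mono : ∀ {s t}, s ≤ t → F s ≤ F t
  mul_mem : ∀ {s t a c}, a ∈ F s → c ∈ F t → a * c ∈ F (s + t)
  strict : ∀ {s t a c}, a ∈ F s → a ∉ F (s - 1) → c ∈ F t → c ∉ F (t - 1) →
    a * c ∉ F (s + t - 1)
  ι_F : ∀ c, ι c ∈ F 0
  ι_L : ∀ c, ∀ a ∈ L, ι c * a ∈ L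
  ev_ι : ∀ c, ev (ι c) = fun _ => c
  ω_unit : IsUnit ω
  ω_F : ω ∈ F e
  ω_L : ∀ a ∈ L, ∀ c ∈ L, ω * a * c ∈ L
  neg : ∀ a ∈ L, a ∈ F (-1) → a = 0
  inj : ∀ a ∈ L, a ∈ F (N - 1) → ev a = 0 → a = 0
  lead : ∀ i : ℕ, ∃ a ∈ L, a ∈ F i ∧ a ∉ F (i - 1)

namespace EvalData
variable {k : Type u} [Field k] {R : Type v} [CommRing R] {N e : ℕ} (D : EvalData k R N e)

/-- The code of the functions in `L` with pole order less than `s` at infinity. -/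
def code (s : ℕ) : Submodule k (Fin N → k) where
  carrier := {c | ∃ a ∈ D.L, a ∈ D.F (s - 1) ∧ D.ev a = c}
  zero_mem' := ⟨0, AddSubgroup.zero_mem _, AddSubgroup.zero_mem _, map_zero _⟩
  add_mem' := by
    rintro _ _ ⟨a, h1, h2, rfl⟩ ⟨b, h3, h4, rfl⟩
    exact ⟨a + b, AddSubgroup.add_mem _ h1 h3, AddSubgroup.add_mem _ h2 h4, map_add _ _ _⟩
  smul_mem' := by
    rintro c _ ⟨a, h1, h2, rfl⟩
    refine ⟨D.ι c * a, D.ι_L c a h1, ?_, ?_⟩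
    · simpa using D.mul_mem (D.ι_F c) h2
    · rw [map_mul, D.ev_ι]; rfl

/-- For `s ≤ N` evaluation is injective, and there is a function for each of the pole orders
`0, …, s - 1`. -/
theorem le_finrank (s : ℕ) (hs : s ≤ N) : s ≤ Module.finrank k (D.code s) := by
  induction s with
  | zero => exact Nat.zero_le _
  | succ s ih =>
    refine lt_of_le_of_lt (ih (by omega)) (Submodule.finrank_lt_finrank_of_lt ?_)
    refine lt_of_le_not_ge ?_ ?_
    · rintro _ ⟨a, h1, h2, rfl⟩
      exact ⟨a, h1, D.mono (by push_cast; linarith) h2, rfl⟩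
    · intro hle
      obtain ⟨a, h1, h2, h3⟩ := D.lead s
      obtain ⟨a', h1', hmem, he⟩ := hle ⟨a, h1, by simpa using h2, rfl⟩
      have h4 : a - a' = 0 := by
        refine D.inj _ (AddSubgroup.sub_mem _ h1 h1') ?_ (by rw [map_sub, he, sub_self])
        refine AddSubgroup.sub_mem _ (D.mono ?_ h2) (D.mono ?_ hmem) <;>
        · have : (s : ℤ) + 1 ≤ N := by exact_mod_cast hs
          linarith
      rw [sub_eq_zero.1 h4] at h3
      exact absurd hmem h3

/-- A nonzero element of `L` has an exact pole order, which is nonnegative. -/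
theorem exists_order {a : R} (ha : a ∈ D.L) (h0 : a ≠ 0) {s : ℕ} (hs : a ∈ D.F (s - 1)) :
    ∃ d : ℕ, d + 1 ≤ s ∧ a ∈ D.F d ∧ a ∉ D.F (d - 1) := by
  induction s with
  | zero => exact absurd (D.neg a ha (by simpa using hs)) h0
  | succ s ih =>
    by_cases h : a ∈ D.F (s - 1)
    · obtain ⟨d, h1, h2⟩ := ih h
      exact ⟨d, by omega, h2⟩
    · exact ⟨s, le_rfl, by simpa using hs, h⟩

/-- If `a` and `c` evaluate to words with disjoint supports, `ω * a * c ∈ L` vanishes at all the points,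
but its pole order is less than `N`; so it is zero, against strictness. -/
theorem mutuallyIntersecting {s s' : ℕ} (h : s + s' + e ≤ N + 1) :
    MutuallyIntersecting (D.code s) (D.code s') := by
  rintro _ ⟨a, ha, haF, rfl⟩ ha0 _ ⟨c, hc, hcF, rfl⟩ hc0
  by_contra! hno
  have ha1 : a ≠ 0 := fun h => ha0 (by rw [h, map_zero])
  have hc1 : c ≠ 0 := fun h => hc0 (by rw [h, map_zero])
  obtain ⟨d, hd, h1, h2⟩ := D.exists_order ha ha1 haF
  obtain ⟨d', hd', h1', h2'⟩ := D.exists_order hc hc1 hcF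
  have hz : D.ω * a * c = 0 := by
    refine D.inj _ (D.ω_L a ha c hc) ?_ ?_
    · refine D.mono ?_ (D.mul_mem (D.mul_mem D.ω_F h1) h1')
      have : (d : ℤ) + 1 + (d' + 1) + e ≤ N + 1 := by
        exact_mod_cast (by omega : d + 1 + (d' + 1) + e ≤ N + 1)
      linarith
    · funext i
      rw [map_mul, map_mul]
      change D.ev D.ω i * D.ev a i * D.ev c i = 0
      by_cases hi : D.ev a i = 0
      · rw [hi]; simp
      · rw [hno i hi]; simp
  rw [mul_assoc, D.ω_unit.mul_right_eq_zero] at hz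
  exact D.strict h1 h2 h1' h2' (by rw [hz]; exact AddSubgroup.zero_mem _)

end EvalData

/-! ### The bottom of the tower -/

namespace Node
variable {ℓ : ℕ} [hℓ : Fact (2 ≤ ℓ)]

section base
variable {k : Type u} [Field k]

/-- The uniformiser at `x = 0` (and at infinity, where `x = T⁻¹`). -/
noncomputable abbrev T (k : Type u) [Field k] : LaurentSeries k := ps k PowerSeries.X

theorem ps_eq_T_mul {γ : PowerSeries k} (h : PowerSeries.constantCoeff γ = 0) :
    ∃ δ, ps k γ = T k * ps k δ := by
  obtain ⟨δ, rfl⟩ := PowerSeries.X_dvd_iff.2 h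
  exact ⟨δ, map_mul _ _ _⟩

theorem constantCoeff_of_eq {γ δ : PowerSeries k} (h : ps k γ = T k * ps k δ) :
    PowerSeries.constantCoeff γ = 0 := by
  rw [← map_mul] at h
  rw [ps_inj h]; simp

theorem one_add_T_pow (k : Type u) [Field k] :
    1 + T k ^ (ℓ - 1) ≠ 0 ∧ 1 + T k ^ (ℓ - 1) ∈ (ps k).range ∧
      (1 + T k ^ (ℓ - 1))⁻¹ ∈ (ps k).range := by
  have h2 := hℓ.out
  have h1 : 1 + T k ^ (ℓ - 1) = ps k (1 + PowerSeries.X ^ (ℓ - 1)) := by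
    rw [map_add, map_pow, map_one]
  have h3 : PowerSeries.constantCoeff (1 + PowerSeries.X ^ (ℓ - 1) : PowerSeries k) ≠ 0 := by
    simp [zero_pow (by omega : ℓ - 1 ≠ 0)]
  refine ⟨?_, ⟨_, h1.symm⟩, by rw [h1]; exact ps_unit h3⟩
  rw [h1, Ne, map_eq_zero_iff _ ps_inj]
  intro h
  exact h3 (by rw [h, map_zero])

theorem T_pow_add : T k ^ ℓ + T k = (1 + T k ^ (ℓ - 1)) * T k := by
  rw [pow_add_self, mul_comm]

theorem T_pow_ne : T k ^ ℓ + T k ≠ 0 := by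
  rw [T_pow_add]; exact mul_ne_zero (one_add_T_pow k).1 ps_X_ne

theorem T_inv_mul : ((T k)⁻¹ ^ ℓ + (T k)⁻¹) * T k ^ ℓ = 1 + T k ^ (ℓ - 1) := by
  have h2 := hℓ.out
  have hT : T k ≠ 0 := ps_X_ne
  have h1 : T k ^ ℓ = T k ^ (ℓ - 1) * T k := by rw [← pow_succ, Nat.sub_add_cancel (by omega)]
  rw [add_mul, ← mul_pow, inv_mul_cancel₀ hT, one_pow, h1]
  field_simp

theorem T_inv_ne : (T k)⁻¹ ^ ℓ + (T k)⁻¹ ≠ 0 := by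
  intro h
  have := T_inv_mul (ℓ := ℓ) (k := k)
  rw [h, zero_mul] at this
  exact (one_add_T_pow k).1 this.symm

/-- The bottom of the tower: the product of the completions of `k(x)` at infinity and at `0` and of the
residue fields at the points `a` of nonzero trace. Functions in `k[x, x⁻¹]` are embedded
diagonally. -/
@[reducible] noncomputable def base (ℓ : ℕ) [Fact (2 ≤ ℓ)] (k : Type u) [Field k] : Node ℓ where
  R := LaurentSeries k × LaurentSeries k × ({a : k // a ^ ℓ + a ≠ 0} → k)
  x := ((T k)⁻¹, T k, fun a => a.1)
  u := (((T k)⁻¹ ^ ℓ + (T k)⁻¹)⁻¹, (T k ^ ℓ + T k)⁻¹, fun a => (a.1 ^ ℓ + a.1)⁻¹)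
  hu := Prod.ext (mul_inv_cancel₀ T_inv_ne) (Prod.ext (mul_inv_cancel₀ T_pow_ne)
    (funext fun a => mul_inv_cancel₀ a.2))

/-- The element `x` as a unit. -/
noncomputable def xUnit (ℓ : ℕ) [Fact (2 ≤ ℓ)] (k : Type u) [Field k] : (base ℓ k).Rˣ where
  val := (base ℓ k).x
  inv := ((base ℓ k).x ^ (ℓ - 1) + 1) * (base ℓ k).u
  val_inv := (base ℓ k).x_mul_inv
  inv_val := by rw [mul_comm]; exact (base ℓ k).x_mul_inv

/-- The element `ω = x ^ ℓ + x` as a unit. -/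
noncomputable def wUnit (ℓ : ℕ) [Fact (2 ≤ ℓ)] (k : Type u) [Field k] : (base ℓ k).Rˣ where
  val := (base ℓ k).x ^ ℓ + (base ℓ k).x
  inv := (base ℓ k).u
  val_inv := (base ℓ k).hu
  inv_val := by rw [mul_comm]; exact (base ℓ k).hu

/-- The component at infinity. -/
noncomputable def prInf : (base ℓ k).R →+* LaurentSeries k := RingHom.fst _ _

/-- The component at `x = 0`. -/
noncomputable def prZero : NHom (base ℓ k) (fld (T k) T_pow_ne) :=
  ⟨(RingHom.fst _ _).comp (RingHom.snd _ _), rfl⟩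

/-- The component at the point `x = a`. -/
noncomputable def prPt (a : {a : k // a ^ ℓ + a ≠ 0}) : NHom (base ℓ k) (fld a.1 a.2) :=
  ⟨(Pi.evalRingHom _ a).comp ((RingHom.snd _ _).comp (RingHom.snd _ _)), rfl⟩

theorem base_ext {c d : (base ℓ k).R} (h1 : prInf c = prInf d) (h2 : prZero.f c = prZero.f d)
    (h3 : ∀ a, (prPt a).f c = (prPt a).f d) : c = d :=
  Prod.ext h1 (Prod.ext h2 (funext h3))

/-- The constants, embedded diagonally. -/
noncomputable def const : k →+* (base ℓ k).R :=
  ((ps k).comp PowerSeries.C).prod (((ps k).comp PowerSeries.C).prod (RingHom.pi fun _ => RingHom.id k))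

/-- The polynomials in `x`, embedded diagonally. -/
noncomputable def pe : k[X] →+* (base ℓ k).R := eval₂RingHom const (base ℓ k).x

theorem prZero_pe (p : k[X]) : (prZero (ℓ := ℓ)).f (pe p) = ps k (p : PowerSeries k) := by
  have : ((prZero (ℓ := ℓ) (k := k)).f.comp pe) = (ps k).comp (Polynomial.coeToPowerSeries.ringHom) := by
    apply Polynomial.ringHom_ext
    · intro a
      simp only [RingHom.comp_apply, pe, coe_eval₂RingHom, eval₂_C,
        coeToPowerSeries.ringHom_apply, Polynomial.coe_C]
      rfl
    · simp only [RingHom.comp_apply, pe, coe_eval₂RingHom, eval₂_X,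
        coeToPowerSeries.ringHom_apply, Polynomial.coe_X]
      rfl
  exact RingHom.congr_fun this p

theorem prPt_pe (a : {a : k // a ^ ℓ + a ≠ 0}) (p : k[X]) : (prPt a).f (pe p) = p.eval a.1 := by
  have : ((prPt a).f.comp pe) = evalRingHom a.1 := by
    apply Polynomial.ringHom_ext
    · intro a
      simp only [RingHom.comp_apply, pe, coe_eval₂RingHom, eval₂_C, coe_evalRingHom, eval_C]
      rfl
    · simp only [RingHom.comp_apply, pe, coe_eval₂RingHom, eval₂_X, coe_evalRingHom, eval_X]
      rfl
  exact RingHom.congr_fun this p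

theorem ps_coe (p : k[X]) : ps k (p : PowerSeries k) = p.eval₂ ((ps k).comp PowerSeries.C) (T k) := by
  have : (ps k).comp (Polynomial.coeToPowerSeries.ringHom) =
      eval₂RingHom ((ps k).comp PowerSeries.C) (T k) := by
    apply Polynomial.ringHom_ext
    · intro a
      simp only [RingHom.comp_apply, coe_eval₂RingHom, eval₂_C,
        coeToPowerSeries.ringHom_apply, Polynomial.coe_C]
    · simp only [RingHom.comp_apply, coe_eval₂RingHom, eval₂_X,
        coeToPowerSeries.ringHom_apply, Polynomial.coe_X]
  exact RingHom.congr_fun this p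

/-- At infinity a polynomial is expanded by reversing its coefficients. -/
theorem prInf_pe (p : k[X]) {N : ℕ} (hN : p.natDegree ≤ N) :
    prInf (pe (ℓ := ℓ) p) * T k ^ N = ps k (p.reflect N : k[X]) := by
  have h1 : prInf (pe (ℓ := ℓ) p) = p.eval₂ ((ps k).comp PowerSeries.C) (T k)⁻¹ := by
    simp only [pe, coe_eval₂RingHom]
    rw [Polynomial.hom_eval₂]
    rfl
  have hT : T k ≠ 0 := ps_X_ne
  let : Invertible (T k) := invertibleOfNonzero hT
  have h2 := Polynomial.eval₂_reflect_mul_pow ((ps k).comp PowerSeries.C) (T k) N (p.reflect N) (by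
    rw [natDegree_le_iff_coeff_eq_zero]
    intro i hi
    rw [coeff_reflect, revAt_eq_self_of_lt hi]
    exact coeff_eq_zero_of_natDegree_lt (by omega))
  rw [reflect_reflect, invOf_eq_inv] at h2
  rw [h1, ps_coe, h2]

theorem constantCoeff_reflect (p : k[X]) (N : ℕ) :
    PowerSeries.constantCoeff ((p.reflect N : k[X]) : PowerSeries k) = p.coeff N := by
  rw [← PowerSeries.coeff_zero_eq_constantCoeff_apply, Polynomial.coeff_coe, coeff_reflect,
    revAt_zero]

/-- The ring `k[x, x⁻¹]` of functions regular away from `0` and infinity. -/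
noncomputable def away (ℓ : ℕ) [Fact (2 ≤ ℓ)] (k : Type u) [Field k] : Subring (base ℓ k).R where
  carrier := {c | ∃ (d : ℕ) (p : k[X]), c * (base ℓ k).x ^ d = pe p}
  zero_mem' := ⟨0, 0, by simp⟩
  one_mem' := ⟨0, 1, by simp⟩
  add_mem' := by
    rintro a c ⟨d, p, h⟩ ⟨d', p', h'⟩
    refine ⟨d + d', p * X ^ d' + p' * X ^ d, ?_⟩
    have hX : pe (ℓ := ℓ) (X : k[X]) = (base ℓ k).x := eval₂_X _ _
    rw [map_add, map_mul, map_mul, map_pow, map_pow, hX, ← h, ← h']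
    ring
  mul_mem' := by
    rintro a c ⟨d, p, h⟩ ⟨d', p', h'⟩
    refine ⟨d + d', p * p', ?_⟩
    rw [map_mul, ← h, ← h']
    ring
  neg_mem' := by
    rintro a ⟨d, p, h⟩
    exact ⟨d, -p, by rw [map_neg, ← h]; ring⟩

theorem pe_X : pe (ℓ := ℓ) (X : k[X]) = (base ℓ k).x := eval₂_X _ _

theorem x_mem_away : (base ℓ k).x ∈ away ℓ k := ⟨0, X, by rw [pe_X, pow_zero, mul_one]⟩

theorem xinv_mem_away : ((xUnit ℓ k)⁻¹ : (base ℓ k).Rˣ).1 ∈ away ℓ k := by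
  refine ⟨1, 1, ?_⟩
  rw [pow_one, map_one]
  exact (xUnit ℓ k).inv_mul

theorem const_mem_away (c : k) : const c ∈ away ℓ k :=
  ⟨0, C c, by rw [pow_zero, mul_one]; exact (eval₂_C _ _).symm⟩

theorem w_mem_away : (wUnit ℓ k).1 ∈ away ℓ k :=
  (away ℓ k).add_mem ((away ℓ k).pow_mem x_mem_away _) x_mem_away

/-- The filtration of `k[x, x⁻¹]` by the order of the pole along `x ^ ℓ + x = 0`. -/
noncomputable def filtW (ℓ : ℕ) [Fact (2 ≤ ℓ)] (k : Type u) [Field k] : Filt (base ℓ k) :=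
  Filt.ofSubring (away ℓ k) (wUnit ℓ k)
    w_mem_away
    (by
      have : (base ℓ k).b * (wUnit ℓ k).1 = (base ℓ k).x ^ (ℓ + 1) := by
        rw [b, mul_assoc, show (base ℓ k).u * (wUnit ℓ k).1 = 1 from (wUnit ℓ k).inv_mul, mul_one]
      rw [this]
      exact (away ℓ k).pow_mem x_mem_away _)
    (by
      have : (base ℓ k).binv * ((wUnit ℓ k)⁻¹ : (base ℓ k).Rˣ).1 =
          ((xUnit ℓ k)⁻¹ : (base ℓ k).Rˣ).1 ^ (ℓ + 1) := by
        rw [binv, mul_right_comm]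
        change (wUnit ℓ k).1 * ((wUnit ℓ k)⁻¹ : (base ℓ k).Rˣ).1 * _ = _
        rw [(wUnit ℓ k).mul_inv, one_mul]
        rfl
      rw [this]
      exact (away ℓ k).pow_mem xinv_mem_away _)

theorem filtW_zero : (away ℓ k).toAddSubgroup = (filtW ℓ k).F 0 := by
  ext a
  rw [filtW, Filt.mem_ofSubring]
  simp

theorem w_mem_filtW : (wUnit ℓ k).1 ∈ (filtW ℓ k).F (-1) := by
  rw [filtW, Filt.mem_ofSubring]
  simp

/-- The elements that are integral at infinity. -/
noncomputable def regInf (ℓ : ℕ) [Fact (2 ≤ ℓ)] (k : Type u) [Field k] : Subring (base ℓ k).R :=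
  (ps k).range.comap prInf

theorem prInf_x : prInf (base ℓ k).x = (T k)⁻¹ := rfl

theorem prInf_xinv : prInf ((xUnit ℓ k)⁻¹ : (base ℓ k).Rˣ).1 = T k := by
  have h := congrArg prInf (xUnit ℓ k).mul_inv
  rw [map_mul, map_one] at h
  have h1 : prInf (xUnit ℓ k).1 = (T k)⁻¹ := rfl
  rw [h1] at h
  exact ((inv_mul_eq_one₀ ps_X_ne).1 h).symm

/-- The filtration by pole order at infinity. -/
noncomputable def filtInf (ℓ : ℕ) [Fact (2 ≤ ℓ)] (k : Type u) [Field k] : Filt (base ℓ k) :=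
  Filt.ofSubring (regInf ℓ k) (xUnit ℓ k)⁻¹
    (by
      change prInf _ ∈ (ps k).range
      rw [prInf_xinv]; exact ⟨_, rfl⟩)
    (by
      change prInf _ ∈ (ps k).range
      rw [map_mul, prInf_xinv]
      have : prInf (base ℓ k).b * T k = (1 + T k ^ (ℓ - 1))⁻¹ := by
        change (T k)⁻¹ ^ (ℓ + 1) * ((T k)⁻¹ ^ ℓ + (T k)⁻¹)⁻¹ * T k = _
        rw [← T_inv_mul, mul_inv, pow_succ, ← inv_pow]
        have := ps_X_ne (k := k)
        field_simp
      rw [this]; exact (one_add_T_pow k).2.2)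
    (by
      change prInf _ ∈ (ps k).range
      rw [map_mul, inv_inv]
      have : prInf (base ℓ k).binv * prInf (xUnit ℓ k).1 = 1 + T k ^ (ℓ - 1) := by
        have h1 : prInf (base ℓ k).binv =
          ((T k)⁻¹ ^ ℓ + (T k)⁻¹) * (prInf ((xUnit ℓ k)⁻¹ : (base ℓ k).Rˣ).1) ^ (ℓ + 1) := rfl
        have h2 : prInf (xUnit ℓ k).1 = (T k)⁻¹ := rfl
        rw [h1, h2, prInf_xinv, pow_succ, ← T_inv_mul, mul_assoc, mul_assoc,
          mul_inv_cancel₀ ps_X_ne, mul_one]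
      rw [this]; exact (one_add_T_pow k).2.1)

theorem mem_filtInf {s : ℤ} {c : (base ℓ k).R} :
    c ∈ (filtInf ℓ k).F s ↔ prInf (ℓ := ℓ) c * T k ^ s ∈ (ps k).range := by
  rw [filtInf, Filt.mem_ofSubring]
  change prInf (ℓ := ℓ) _ ∈ (ps k).range ↔ _
  rw [map_mul]
  suffices h : prInf (((xUnit ℓ k)⁻¹ ^ s : (base ℓ k).Rˣ) : (base ℓ k).R) = T k ^ s by rw [h]
  have h1 : Units.map (prInf (ℓ := ℓ) (k := k)).toMonoidHom (xUnit ℓ k)⁻¹ = Units.mk0 (T k) ps_X_ne :=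
    Units.ext prInf_xinv
  have h2 := congrArg (fun v => ((v ^ s : (LaurentSeries k)ˣ) : LaurentSeries k)) h1
  rw [← map_zpow] at h2
  exact h2.trans (by simp)

end base
end Node

/-! ### Riemann–Roch facts for the projective line -/

namespace Node
variable {ℓ : ℕ} [hℓ : Fact (2 ≤ ℓ)]

section base
variable {k : Type u} [Field k]

/-- An element of exact pole order `s` is `T ^ (-s)` times a unit power series at infinity. -/
theorem exists_unit_of_mem {s : ℤ} {c : (base ℓ k).R} (h : c ∈ (filtInf ℓ k).F s)
    (h' : c ∉ (filtInf ℓ k).F (s - 1)) :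
    ∃ γ, PowerSeries.constantCoeff γ ≠ 0 ∧ prInf (ℓ := ℓ) c * T k ^ s = ps k γ := by
  have hT : T k ≠ 0 := ps_X_ne
  rw [mem_filtInf] at h h'
  obtain ⟨γ, hγ⟩ := h
  refine ⟨γ, fun h0 => h' ?_, hγ.symm⟩
  obtain ⟨δ, hδ⟩ := ps_eq_T_mul h0
  refine ⟨δ, ?_⟩
  rw [zpow_sub_one₀ hT, ← mul_assoc, ← hγ, hδ]
  field_simp

theorem not_mem_of_unit {s : ℤ} {c : (base ℓ k).R} {γ : PowerSeries k}
    (h0 : PowerSeries.constantCoeff γ ≠ 0) (h : prInf (ℓ := ℓ) c * T k ^ s = ps k γ) :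
    c ∉ (filtInf ℓ k).F (s - 1) := by
  have hT : T k ≠ 0 := ps_X_ne
  rw [mem_filtInf]
  rintro ⟨δ, hδ⟩
  refine h0 (constantCoeff_of_eq (δ := δ) ?_)
  rw [hδ, ← h, zpow_sub_one₀ hT]
  field_simp

theorem filtInf_strict : (filtInf ℓ k).Strict := by
  intro s t a c ha ha' hc hc'
  have hT : T k ≠ 0 := ps_X_ne
  obtain ⟨γ, h1, h2⟩ := exists_unit_of_mem ha ha'
  obtain ⟨δ, h3, h4⟩ := exists_unit_of_mem hc hc'
  refine not_mem_of_unit (γ := γ * δ) (by rw [map_mul]; exact mul_ne_zero h1 h3) ?_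
  rw [map_mul, map_mul, zpow_add₀ hT, ← h2, ← h4]
  ring

theorem w_mem_filtInf : (wUnit ℓ k).1 ∈ (filtInf ℓ k).F ℓ := by
  rw [mem_filtInf, zpow_natCast]
  change ((T k)⁻¹ ^ ℓ + (T k)⁻¹) * T k ^ ℓ ∈ _
  rw [T_inv_mul]
  exact (one_add_T_pow k).2.1

theorem const_mem_filtInf (c : k) : const c ∈ (filtInf ℓ k).F 0 := by
  rw [mem_filtInf, zpow_zero, mul_one]
  exact ⟨PowerSeries.C c, rfl⟩

theorem base_lead (i : ℕ) : ∃ b ∈ (away ℓ k).toAddSubgroup, b ∈ (filtInf ℓ k).F i ∧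
    b ∉ (filtInf ℓ k).F (i - 1) := by
  have h : prInf (ℓ := ℓ) ((base ℓ k).x ^ i) * T k ^ (i : ℤ) = ps k 1 := by
    rw [map_pow, prInf_x, zpow_natCast, ← mul_pow, inv_mul_cancel₀ ps_X_ne, one_pow, map_one]
  refine ⟨(base ℓ k).x ^ i, (away ℓ k).pow_mem x_mem_away _, ?_, not_mem_of_unit (by simp) h⟩
  rw [mem_filtInf, h]
  exact ⟨_, rfl⟩

/-- The functions `p / x ^ d` lie in `k[x, x⁻¹]`. -/
theorem exists_div (d : ℕ) (p : k[X]) : ∃ c ∈ away ℓ k, c * (base ℓ k).x ^ d = pe p := by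
  have h : pe (ℓ := ℓ) p * ((xUnit ℓ k)⁻¹ : (base ℓ k).Rˣ).1 ^ d * (base ℓ k).x ^ d = pe p := by
    rw [mul_assoc, ← mul_pow, show ((xUnit ℓ k)⁻¹ : (base ℓ k).Rˣ).1 * (base ℓ k).x = 1 from
      (xUnit ℓ k).inv_mul, one_pow, mul_one]
  exact ⟨_, ⟨d, p, h⟩, h⟩

theorem x_pow_cancel {a c : (base ℓ k).R} {d : ℕ} (h : a * (base ℓ k).x ^ d = c * (base ℓ k).x ^ d) :
    a = c := by
  have : IsUnit ((base ℓ k).x ^ d) := (xUnit ℓ k).isUnit.pow d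
  exact this.mul_left_injective h

theorem prInf_of_mul {c : (base ℓ k).R} {d : ℕ} {p : k[X]} (h : c * (base ℓ k).x ^ d = pe p) :
    prInf (ℓ := ℓ) c = prInf (ℓ := ℓ) (pe p) * T k ^ d := by
  rw [← h, map_mul, map_pow, prInf_x, mul_assoc, ← mul_pow, inv_mul_cancel₀ ps_X_ne, one_pow,
    mul_one]

theorem prZero_of_mul {c : (base ℓ k).R} {d : ℕ} {p : k[X]} (h : c * (base ℓ k).x ^ d = pe p) :
    (prZero (ℓ := ℓ)).f c * T k ^ d = ps k (p : PowerSeries k) := by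
  rw [← prZero_pe, ← h, map_mul, map_pow]
  rfl

/-- Laurent series at `0` are the direct sum of power series and of the principal parts, and the latter are
the elements of `k[x, x⁻¹]` vanishing at infinity, that is, of `x⁻¹ k[x⁻¹]`. -/
theorem base_compl : Compl (prZero (ℓ := ℓ) (k := k))
    ((away ℓ k).toAddSubgroup ⊓ (filtInf ℓ k).F (-1)) (ps k).range.toAddSubgroup := by
  have hT : T k ≠ 0 := ps_X_ne
  constructor
  · intro g
    obtain ⟨d, γ, h⟩ := ps_surj g
    obtain ⟨c, hc, hcd⟩ := exists_div (ℓ := ℓ) d (γ.trunc d)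
    refine ⟨c, ⟨hc, ?_⟩, ?_⟩
    · change c ∈ (filtInf ℓ k).F (-1)
      rw [mem_filtInf, prInf_of_mul hcd]
      rcases d with _ | d
      · have : γ.trunc 0 = 0 := by ext; simp
        rw [this, map_zero, map_zero, zero_mul, zero_mul]
        exact Subring.zero_mem _
      · have h1 : (γ.trunc (d + 1)).natDegree ≤ d := Nat.lt_succ_iff.1 (PowerSeries.natDegree_trunc_lt γ d)
        refine ⟨_, ((prInf_pe (ℓ := ℓ) _ h1)).symm.trans ?_⟩
        rw [mul_assoc, zpow_neg_one, pow_succ, mul_assoc, mul_inv_cancel₀ hT, mul_one]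
    · have h1 : (PowerSeries.X ^ d : PowerSeries k) ∣ γ - (γ.trunc d : k[X]) := by
        rw [PowerSeries.X_pow_dvd_iff]
        intro i hi
        rw [map_sub, Polynomial.coeff_coe, PowerSeries.coeff_trunc, if_pos hi, sub_self]
      obtain ⟨δ, hδ⟩ := h1
      refine ⟨δ, ?_⟩
      have h2 := congrArg (ps k) hδ
      rw [map_sub, ← h, ← prZero_of_mul hcd, map_mul, map_pow] at h2
      have h3 : T k ^ d ≠ 0 := pow_ne_zero _ hT
      refine mul_left_cancel₀ h3 ?_
      refine Eq.trans h2.symm ?_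
      ring
  · rintro c ⟨⟨d, p, h⟩, hF⟩ ⟨γ, hγ⟩
    have hp : p = 0 := by
      by_contra hp
      have h1 := prZero_of_mul h
      rw [← hγ, ← map_pow, ← map_mul] at h1
      have h2 : d ≤ p.natDegree := by
        by_contra hlt
        push Not at hlt
        have h3 : (PowerSeries.X ^ d : PowerSeries k) ∣ (p : PowerSeries k) :=
          ⟨γ, by rw [← ps_inj h1, mul_comm]⟩
        rw [PowerSeries.X_pow_dvd_iff] at h3
        have h4 := h3 _ hlt
        rw [Polynomial.coeff_coe] at h4
        exact hp (leadingCoeff_eq_zero.1 h4)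
      replace hF : c ∈ (filtInf ℓ k).F (-1) := hF
      rw [mem_filtInf, prInf_of_mul h] at hF
      obtain ⟨δ, hδ⟩ := hF
      obtain ⟨e, he⟩ := Nat.exists_eq_add_of_le h2
      have h5 := prInf_pe (ℓ := ℓ) p le_rfl
      have h6 : ps k (p.reflect p.natDegree : k[X]) = T k * ps k (PowerSeries.X ^ e * δ) := by
        rw [← h5, map_mul, hδ, map_pow, zpow_neg_one]
        rw [show T k ^ p.natDegree = T k ^ d * T k ^ e by rw [← pow_add, ← he]]
        field_simp
      have h7 := constantCoeff_of_eq h6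
      rw [constantCoeff_reflect] at h7
      exact hp (leadingCoeff_eq_zero.1 h7)
    refine x_pow_cancel (d := d) ?_
    rw [h, hp, map_zero, zero_mul]

/-- The polynomial with simple zeros exactly at the points of nonzero trace. -/
noncomputable def zpoly (ℓ : ℕ) (k : Type u) [Field k] [Fintype k] [DecidableEq k] : k[X] :=
  ∏ a : {a : k // a ^ ℓ + a ≠ 0}, (X - C a.1)

variable [Fintype k] [DecidableEq k]

theorem zpoly_monic : (zpoly ℓ k).Monic := monic_prod_of_monic _ _ fun a _ => monic_X_sub_C a.1

theorem zpoly_natDegree : (zpoly ℓ k).natDegree = Fintype.card {a : k // a ^ ℓ + a ≠ 0} := by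
  rw [zpoly, natDegree_prod_of_monic _ _ fun a _ => monic_X_sub_C a.1]
  simp

/-- A function vanishing at all the points is divisible by `zpoly`, whose pole order at infinity is the
number of points. -/
theorem base_divis (s : ℤ) (c : (base ℓ k).R) (hc : c ∈ (away ℓ k).toAddSubgroup)
    (hs : c ∈ (filtInf ℓ k).F s) (h0 : ∀ a, (prPt (ℓ := ℓ) (k := k) a).f c = 0) :
    ∃ h ∈ (away ℓ k).toAddSubgroup,
      h ∈ (filtInf ℓ k).F (s - (Fintype.card {a : k // a ^ ℓ + a ≠ 0} : ℕ)) ∧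
      c = pe (zpoly ℓ k) * h := by
  have hT : T k ≠ 0 := ps_X_ne
  obtain ⟨d, p, h⟩ := hc
  have hdvd : zpoly ℓ k ∣ p := by
    refine Finset.prod_dvd_of_coprime ?_ fun a _ => ?_
    · intro a _ b _ hab
      exact isCoprime_X_sub_C_of_isUnit_sub
        (isUnit_iff_ne_zero.2 (sub_ne_zero.2 fun h => hab (Subtype.ext h)))
    · rw [dvd_iff_isRoot, IsRoot, ← prPt_pe a p, ← h, map_mul, h0 a, zero_mul]
  obtain ⟨q, rfl⟩ := hdvd
  obtain ⟨g, hg, hgd⟩ := exists_div (ℓ := ℓ) d q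
  have hcg : c = pe (zpoly ℓ k) * g := x_pow_cancel (d := d) (by rw [h, mul_assoc, hgd, map_mul])
  refine ⟨g, hg, ?_, hcg⟩
  rw [mem_filtInf] at hs ⊢
  have h1 := prInf_pe (ℓ := ℓ) (zpoly ℓ k) le_rfl
  have h2 : PowerSeries.constantCoeff
      (((zpoly ℓ k).reflect (zpoly ℓ k).natDegree : k[X]) : PowerSeries k) ≠ 0 := by
    rw [constantCoeff_reflect]
    have := zpoly_monic (ℓ := ℓ) (k := k)
    rw [Monic, leadingCoeff] at this
    rw [this]; exact one_ne_zero
  have h3 := ps_unit h2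
  rw [← h1, zpoly_natDegree] at h3
  have h4 : prInf (ℓ := ℓ) (pe (zpoly ℓ k)) ≠ 0 := by
    intro h
    rw [h, zero_mul, eq_comm, map_eq_zero_iff _ ps_inj] at h1
    exact h2 (by rw [h1, map_zero])
  convert Subring.mul_mem _ hs h3 using 1
  rw [hcg, map_mul, zpow_sub₀ hT, zpow_natCast]
  field_simp

theorem zpoly_unit : (ps k (zpoly ℓ k))⁻¹ ∈ (ps k).range ∧ ps k (zpoly ℓ k) ≠ 0 := by
  have h2 := hℓ.out
  have h : PowerSeries.constantCoeff ((zpoly ℓ k : k[X]) : PowerSeries k) ≠ 0 := by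
    rw [← PowerSeries.coeff_zero_eq_constantCoeff_apply, Polynomial.coeff_coe,
      coeff_zero_eq_eval_zero, zpoly, eval_prod]
    refine Finset.prod_ne_zero_iff.2 fun a _ => ?_
    rw [eval_sub, eval_X, eval_C, zero_sub, neg_ne_zero]
    intro h0
    apply a.2
    rw [h0, zero_pow (by omega), zero_add]
  refine ⟨ps_unit h, ?_⟩
  rw [Ne, map_eq_zero_iff _ ps_inj]
  intro h1
  exact h (by rw [h1, map_zero])

end base
end Node

/-! ### The codes on level `j`, and their asymptotics -/

namespace Node
variable {ℓ : ℕ} [hℓ : Fact (2 ≤ ℓ)]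

section final
variable {k : Type u} [Field k] [Fintype k] [DecidableEq k]

theorem exists_local_module {p f : ℕ} [Fact p.Prime] [CharP k p]
    (hpf : ℓ = p ^ f) (hk : Fintype.card k = ℓ ^ 2) (j : ℕ) :
    ∃ M : AddSubgroup ((fld (T k) (T_pow_ne (ℓ := ℓ))).lev j).R,
      Good (ps k).range (T k) (T_pow_ne (ℓ := ℓ)) j M := by
  classical
  have : CharP (LaurentSeries k) p :=
    charP_of_injective_ringHom (f := (ps k).comp PowerSeries.C) (RingHom.injective _) p
  exact exists_good hpf (zeroChain (k := k) hpf hk) j 0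

theorem card_points {p f : ℕ} [Fact p.Prime] [CharP k p]
    (hpf : ℓ = p ^ f) (hk : Fintype.card k = ℓ ^ 2) :
    Fintype.card {a : k // a ^ ℓ + a ≠ 0} = ℓ ^ 2 - ℓ := by
  have h := Fintype.card_subtype_compl (fun a : k => a ^ ℓ + a = 0)
  rw [hk, Fintype.card_subtype fun a : k => a ^ ℓ + a = 0, (tr_ker_card hpf hk).1] at h
  exact h

/-- The codes on level `j` of the tower. The space `L` consists of the elements that have coordinates in
`k[x, x⁻¹]` and satisfy the local condition `M` above `x = 0`; the function `ω` is `x ^ ℓ + x`. -/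
theorem exists_evalData {p f : ℕ} [Fact p.Prime] [CharP k p]
    (hpf : ℓ = p ^ f) (hk : Fintype.card k = ℓ ^ 2) (j : ℕ) :
    Nonempty (EvalData k ((base ℓ k).lev j).R ((ℓ ^ 2 - ℓ) * ℓ ^ j) (ℓ ^ (j + 1))) := by
  obtain ⟨M, hchain, hclos⟩ := exists_local_module (k := k) hpf hk j
  choose g hg hgc using fun a : {a : k // a ^ ℓ + a ≠ 0} => exists_points hpf hk j a.1 a.2
  let E : Fin ((ℓ ^ 2 - ℓ) * ℓ ^ j) ≃ {a : k // a ^ ℓ + a ≠ 0} × Fin (ℓ ^ j) :=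
    Fintype.equivOfCardEq (by
      rw [Fintype.card_prod, Fintype.card_fin, Fintype.card_fin, card_points hpf hk])
  have hcompl := base_compl.lev j hchain
  let V := (base ℓ k).extendLev (away ℓ k).toAddSubgroup j
  let θ := (prZero (ℓ := ℓ) (k := k)).lev j
  have hmul : ∀ z ∈ away ℓ k, ∀ c ∈ V, (base ℓ k).inc j z * c ∈ V := fun z hz =>
    extendLev_mul (fun c hc => (away ℓ k).mul_mem hz hc) j
  have hθinc : ∀ z, θ.f ((base ℓ k).inc j z) =
      (fld (T k) (T_pow_ne (ℓ := ℓ))).inc j (prZero.f z) := fun z => NHom.lev_inc _ _ _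
  refine ⟨{
    F := ((filtInf ℓ k).lev j).F
    L := V ⊓ M.comap θ.f.toAddMonoidHom
    ι := ((base ℓ k).inc j).comp const
    ev := RingHom.pi fun i => (Pi.evalRingHom _ (E i).2).comp
      ((g (E i).1).comp ((prPt (E i).1).lev j).f)
    ω := (base ℓ k).inc j (wUnit ℓ k).1
    mono := fun h => ((filtInf ℓ k).lev j).mono h
    mul_mem := fun h h' => ((filtInf ℓ k).lev j).mul_mem h h'
    strict := fun h1 h2 h3 h4 => (filtInf_strict.lev j) h1 h2 h3 h4
    ι_F := fun c => by simpa using Filt.lev_inc_mem (const_mem_filtInf c) j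
    ι_L := ?_
    ev_ι := ?_
    ω_unit := (wUnit ℓ k).isUnit.map _
    ω_F := ?_
    ω_L := ?_
    neg := fun a ha haF => hcompl.2 a ⟨ha.1, haF⟩ ha.2
    inj := ?_
    lead := ?_ }⟩
  · rintro c a ⟨haV, haM⟩
    refine ⟨hmul _ (const_mem_away c) a haV, ?_⟩
    change θ.f _ ∈ M
    rw [map_mul, RingHom.comp_apply, hθinc]
    exact hclos.2 _ ⟨PowerSeries.C c, rfl⟩ _ haM
  · intro c
    funext i
    change g (E i).1 (((prPt (E i).1).lev j).f ((base ℓ k).inc j (const c))) (E i).2 = c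
    rw [NHom.lev_inc]
    exact congrFun (hgc (E i).1 c) (E i).2
  · have h := Filt.lev_inc_mem (w_mem_filtInf (ℓ := ℓ) (k := k)) j
    rwa [show (((ℓ ^ (j + 1) : ℕ)) : ℤ) = (ℓ : ℤ) * (ℓ : ℤ) ^ j by push_cast; ring]
  · rintro a ⟨haV, haM⟩ c ⟨hcV, hcM⟩
    refine ⟨extendLev_clos (filtW ℓ k) filtW_zero w_mem_filtW j haV hcV, ?_⟩
    change θ.f _ ∈ M
    have hw : (prZero (ℓ := ℓ) (k := k)).f (wUnit ℓ k).1 = (1 + T k ^ (ℓ - 1)) * T k :=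
      T_pow_add
    rw [map_mul, map_mul, hθinc, hw, map_mul, mul_assoc, mul_assoc, ← mul_assoc _ (θ.f a)]
    exact hclos.2 _ (one_add_T_pow k).2.1 _ (hclos.1 _ haM _ hcM)
  · rintro a ⟨haV, haM⟩ haF h0
    have hpt : ∀ b, ((prPt (ℓ := ℓ) (k := k) b).lev j).f a = 0 := by
      intro b
      apply hg b
      rw [map_zero]
      funext i
      have h := congrFun h0 (E.symm (b, i))
      change g (E (E.symm (b, i))).1 (((prPt (E (E.symm (b, i))).1).lev j).f a)
        (E (E.symm (b, i))).2 = 0 at h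
      rwa [E.apply_symm_apply] at h
    obtain ⟨h, hhV, hhF, rfl⟩ := divis_lev _ base_divis j _ a haV haF hpt
    have hz := zpoly_unit (ℓ := ℓ) (k := k)
    have hh : h = 0 := by
      refine hcompl.2 h ⟨hhV, ?_⟩ ?_
      · refine ((filtInf ℓ k).lev j).mono ?_ hhF
        rw [card_points hpf hk]
        push_cast
        linarith
      · have h1 := hclos.2 _ hz.1 _ haM
        change (fld (T k) (T_pow_ne (ℓ := ℓ))).inc j _ * θ.f _ ∈ M at h1
        rw [map_mul, hθinc, prZero_pe, ← mul_assoc, ← map_mul, inv_mul_cancel₀ hz.2, map_one,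
          one_mul] at h1
        exact h1
    rw [hh, mul_zero]
  · intro i
    obtain ⟨b, hbV, hbF, hbF'⟩ := lead_lev (base_lead (ℓ := ℓ) (k := k)) j i
    obtain ⟨c, ⟨hcV, hcF⟩, hcM⟩ := hcompl.1 (θ.f b)
    refine ⟨b - c, ⟨V.sub_mem hbV hcV, ?_⟩, ?_, ?_⟩
    · change θ.f _ ∈ M
      rw [map_sub]; exact hcM
    · exact AddSubgroup.sub_mem _ hbF (((filtInf ℓ k).lev j).mono (by omega) hcF)
    · intro h
      apply hbF'
      have := AddSubgroup.add_mem _ h (((filtInf ℓ k).lev j).mono (by omega : (-1 : ℤ) ≤ i - 1) hcF)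
      rwa [sub_add_cancel] at this

end final
end Node

/-- Let `q ≥ 9` be a prime power which is a perfect square (so `q^{1/2} − 1 > 1`), and
let `r, r'` be positive reals with `r + r' ≤ 1 − 1/(q^{1/2} − 1)`.  Then there is a
sequence of pairs `(Cᵢ, Cᵢ')` of mutually intersecting linear codes over `F_q`, of
common lengths `nᵢ → ∞`, whose rates are asymptotically at least `(r, r')`. -/
theorem exists_mutually_intersecting_sequence
    (q : ℕ) (hq : IsPrimePow q) (hsq : ∃ s : ℕ, q = s ^ 2) (hq9 : 9 ≤ q)
    (F : Type*) [Field F] [Fintype F] (hF : Fintype.card F = q)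
    (r r' : ℝ) (hr : 0 < r) (hr' : 0 < r')
    (hsum : r + r' ≤ 1 - 1 / (Real.sqrt q - 1)) :
    ∃ (n : ℕ → ℕ) (C C' : ∀ i : ℕ, Submodule F (Fin (n i) → F)),
      Filter.Tendsto n Filter.atTop Filter.atTop ∧
      (∀ i, MutuallyIntersecting (C i) (C' i)) ∧
      r ≤ Filter.liminf (fun i => (Module.finrank F (C i) : ℝ) / n i) Filter.atTop ∧
      r' ≤ Filter.liminf (fun i => (Module.finrank F (C' i) : ℝ) / n i) Filter.atTop := by
  classical
  obtain ⟨ℓ, rfl⟩ := hsq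
  have hℓ3 : 3 ≤ ℓ := by nlinarith
  have : Fact (2 ≤ ℓ) := ⟨by omega⟩
  obtain ⟨p, hp⟩ := CharP.exists F
  have hprime : Fact p.Prime := ⟨CharP.char_is_prime F p⟩
  obtain ⟨m, -, hm⟩ := FiniteField.card F p
  have hdvd : ℓ ∣ p ^ (m : ℕ) := by rw [← hm, hF]; exact Dvd.intro_left (ℓ) (by ring)
  obtain ⟨f, -, hf⟩ := (Nat.dvd_prime_pow hprime.out).1 hdvd
  let D := fun j => (Node.exists_evalData (k := F) hf hF j).some
  rw [Nat.cast_pow, Real.sqrt_sq (Nat.cast_nonneg ℓ)] at hsum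
  have hℓR : (3 : ℝ) ≤ ℓ := by exact_mod_cast hℓ3
  set n : ℕ → ℕ := fun j => (ℓ ^ 2 - ℓ) * ℓ ^ j with hn
  have hnR : ∀ j, (n j : ℝ) = (ℓ - 1) * ℓ ^ (j + 1) := by
    intro j
    have : ℓ ≤ ℓ ^ 2 := by nlinarith
    simp only [hn]
    push_cast [Nat.cast_sub this]
    ring
  have hpos : ∀ j, (0 : ℝ) < n j := by
    intro j; rw [hnR]; exact mul_pos (by linarith) (by positivity)
  -- the dimension `s` is spent on the first code; what `s + s' + e ≤ n + 1` leaves goes to the other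
  let s : ℕ → ℕ := fun j => ⌈r * n j⌉₊
  have key : ∀ j, (r + r') * n j + ℓ ^ (j + 1) ≤ n j := by
    intro j
    have h1 := mul_le_mul_of_nonneg_right hsum (hpos j).le
    have h2 : (1 - 1 / ((ℓ : ℝ) - 1)) * n j = n j - ℓ ^ (j + 1) := by
      have h3 : (ℓ : ℝ) - 1 ≠ 0 := by linarith
      rw [hnR]; field_simp
    linarith
  have hs1 : ∀ j, r * n j ≤ s j := fun j => Nat.le_ceil _
  have hs2 : ∀ j, (s j : ℝ) < r * n j + 1 := fun j =>
    Nat.ceil_lt_add_one (mul_pos hr (hpos j)).le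
  have hle : ∀ j, s j + ℓ ^ (j + 1) ≤ n j := by
    intro j
    have h1 := key j
    have h2 := mul_pos hr' (hpos j)
    have h3 : ((s j + ℓ ^ (j + 1) : ℕ) : ℝ) < (n j + 1 : ℕ) := by
      push_cast; linarith [hs2 j]
    exact Nat.lt_succ_iff.1 (by exact_mod_cast h3)
  let s' : ℕ → ℕ := fun j => n j + 1 - (s j + ℓ ^ (j + 1))
  have hs' : ∀ j, s' j + (s j + ℓ ^ (j + 1)) = n j + 1 := fun j =>
    Nat.sub_add_cancel ((hle j).trans (Nat.le_succ _))
  have hs'R : ∀ j, r' * n j ≤ s' j := by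
    intro j
    have h1 : (s' j : ℝ) + (s j + ℓ ^ (j + 1)) = n j + 1 := by exact_mod_cast hs' j
    linarith [key j, hs2 j]
  have hliminf : ∀ (C : ∀ j, Submodule F (Fin (n j) → F)) (ρ : ℝ),
      (∀ j, ρ * n j ≤ (Module.finrank F (C j) : ℝ)) →
      ρ ≤ Filter.liminf (fun i => (Module.finrank F (C i) : ℝ) / n i) Filter.atTop := by
    intro C ρ h
    refine Filter.le_liminf_of_le ?_ (Filter.Eventually.of_forall fun j => ?_)
    · refine Filter.IsBoundedUnder.isCoboundedUnder_ge ⟨1, ?_⟩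
      rw [Filter.eventually_map]
      refine Filter.Eventually.of_forall fun j => ?_
      refine (div_le_one (hpos j)).2 ?_
      have h1 := Submodule.finrank_le (C j)
      rw [Module.finrank_fin_fun] at h1
      exact_mod_cast h1
    · rw [le_div_iff₀ (hpos j)]
      exact h j
  have hs0 : ∀ j, 1 ≤ s j := fun j => Nat.ceil_pos.2 (mul_pos hr (hpos j))
  refine ⟨n, fun j => (D j).code (s j), fun j => (D j).code (s' j), ?_, fun j => ?_,
    hliminf _ r fun j => ?_, hliminf _ r' fun j => ?_⟩
  · refine Filter.tendsto_atTop_mono (f := fun j => ℓ ^ j) (fun j => ?_)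
      (tendsto_pow_atTop_atTop_of_one_lt (by omega))
    exact Nat.le_mul_of_pos_left _ (Nat.sub_pos_of_lt (by nlinarith))
  · have := hs' j
    exact (D j).mutuallyIntersecting (by change s j + s' j + _ ≤ n j + 1; omega)
  · have h1 := hle j
    exact (hs1 j).trans (by exact_mod_cast (D j).le_finrank (s j) (by change _ ≤ n j; omega))
  · have h1 := hs' j
    have h2 := hs0 j
    exact (hs'R j).trans (by exact_mod_cast (D j).le_finrank (s' j) (by change _ ≤ n j; omega))
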